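/- arXiv:2510.18451 — 3 statements merged into one kernel-verified Lean document; each statement's English description precedes it below -/
import Mathlib

section
/- Let Ψ : (0,∞) → (0,∞) and ω : (0,∞) → (0,1) be such that the maps q ↦ q²Ψ(q) and q ↦ q²Ψ(q)ω(q) are non-increasing on (0,∞), Σ_{q=1}^∞ qΨ(q) < ∞ (sum over positive integers q), lim_{q→∞} ω(q) = 0, and lim_{q→∞} (−log ω(q))/log q = 0. Then dim_H(E(Ψ,ω)) = dim_H(E(Ψ)) = dim_H(Bad(Ψ)) = dim_H(W(Ψ)). -/
/-!
The inclusions `E(Ψ,ω) ⊆ E(Ψ) ⊆ Bad(Ψ) ⊆ W(Ψ)` reduce the theorem to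
`dim W(Ψ) ≤ dim E(Ψ,ω)` (`dimH_WSet_le_dimH_ESet`). Let `t < s < dim W(Ψ)`. Covering `W(Ψ)` by the
obvious balls around fractions shows that `Ψ(Q) > Q^(-2/s)` for infinitely many `Q`
(`dimH_WSet_le`), and it suffices to construct a Cantor set of dimension at least `t` in `E(Ψ,ω)`.

The nodes of the Cantor set are right half-shells
`{x : (1 - ω(q)) Ψ(q) ≤ x - p/q ≤ Ψ(q)}` at least half of which (in measure) stays `2Ψ(s)`-away from
all fractions of larger denominator `s` (`GoodNode`). Given such a node `I` and a large `Q`, the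
points of the good half have Dirichlet approximants of denominator at most `Q`; discarding a small
part of `I` near fractions of denominator less than `Q/100`, these approximants number `≫ |I| Q²`.
If `p/q` is one of them, its shell is far from the fractions of denominator below `q`, because it is
close to a point that is. Fractions `r/s` of denominator `s > q` are treated on average: writing
`k = rq - ps`, the ball around `r/s` meets the shell of `p/q` only if `s` lies in a short window
around `k/(qΨ(q))`, and summing over `p`, `s` and `k` (with divisor sums for the number of
`p` belonging to `s` and `k`) bounds the total overlap (`ApproxData.sum_volume_le`). The bound tends
to zero relative to the number of shells, since `∑ₖ g(kq)/k → 0` for `g(s) = s²Ψ(s)` by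
monotonicity and summability. Hence only `o(Q²)` shells are more than half obstructed
(`ApproxData.sum_card_badNumerators_le`), and `≫ |I| Q²` good children remain, pairwise separated by
`1/(2Q²)` (`ApproxData.exists_children`).

Taking `Q` with `Ψ(Q) > Q^(-2/s)` and using that `ω(q)` decays slower than any power, all children
have length at least `Q^(-θ)` with some `θ < 2/t` (`ApproxData.exists_step`). With `Q` growing fast
along the levels, the mass distribution principle (`le_dimH_of_cantor`) gives dimension at least `t`
(`ApproxData.le_dimH`).
-/

open Filter Set

/-- A real number `x` is `Ψ`-approximable: `|x - p/q| ≤ Ψ q` for infinitely many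
pairs `(p, q) ∈ ℤ × ℕ` (with `q > 0`).  `WSet Ψ` is the set `W(Ψ)` of such `x`. -/
def WSet (Ψ : ℝ → ℝ) : Set ℝ :=
  {x : ℝ | {pq : ℤ × ℕ | 0 < pq.2 ∧ |x - (pq.1 : ℝ) / (pq.2 : ℝ)| ≤ Ψ (pq.2 : ℝ)}.Infinite}

/-- `ESet Ψ ω` is the set `E(Ψ, ω)` of `x ∈ W(Ψ)` such that for all sufficiently large
`q ∈ ℕ` one has `|x - p/q| ≥ (1 - ω q) * Ψ q` for every `p ∈ ℤ`. -/
def ESet (Ψ ω : ℝ → ℝ) : Set ℝ :=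
  {x : ℝ | x ∈ WSet Ψ ∧ ∃ Q : ℕ, ∀ q : ℕ, Q ≤ q → ∀ p : ℤ,
    (1 - ω (q : ℝ)) * Ψ (q : ℝ) ≤ |x - (p : ℝ) / (q : ℝ)|}

/-- `Bad(Ψ)`: the set of `x ∈ W(Ψ)` for which there is `c > 0` such that for all
sufficiently large `q ∈ ℕ`, `|x - p/q| ≥ c·Ψ(q)` for all `p ∈ ℤ`. -/
def BadSet (Ψ : ℝ → ℝ) : Set ℝ :=
  {x : ℝ | x ∈ WSet Ψ ∧ ∃ c : ℝ, 0 < c ∧ ∃ Q : ℕ, ∀ q : ℕ, Q ≤ q → ∀ p : ℤ,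
    c * Ψ (q : ℝ) ≤ |x - (p : ℝ) / (q : ℝ)|}

/-- `E(Ψ)`: the set of `x ∈ W(Ψ)` with `Ψ`-exact approximation order, i.e. there is
`c_x : ℕ → (0,1)` with `c_x(q) → 1` and `|x - p/q| ≥ c_x(q)·Ψ(q)` for all `(p,q) ∈ ℤ × ℕ`. -/
def EExactSet (Ψ : ℝ → ℝ) : Set ℝ :=
  {x : ℝ | x ∈ WSet Ψ ∧ ∃ c : ℕ → ℝ, (∀ q : ℕ, c q ∈ Set.Ioo (0 : ℝ) 1) ∧
    Filter.Tendsto c Filter.atTop (nhds 1) ∧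
    ∀ p : ℤ, ∀ q : ℕ, 0 < q → c q * Ψ (q : ℝ) ≤ |x - (p : ℝ) / (q : ℝ)|}

open MeasureTheory
open scoped ENNReal NNReal Topology

/-! ### Mass distribution on homogeneous Cantor sets -/

/-- Points that are pairwise `Δ`-separated and within `ρ` of each other number at most
`ρ / Δ + 1`. -/
theorem card_le_of_separated (S : Finset ℕ) (y : ℕ → ℝ) {ρ Δ : ℝ} (hΔ : 0 < Δ) (hρ0 : 0 ≤ ρ)
    (hρ : ∀ i ∈ S, ∀ j ∈ S, |y i - y j| ≤ ρ)
    (hsep : ∀ i ∈ S, ∀ j ∈ S, i ≠ j → Δ ≤ |y i - y j|) : (S.card : ℝ) ≤ ρ / Δ + 1 := by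
  rcases S.eq_empty_or_nonempty with rfl | hne
  · simp; positivity
  obtain ⟨m, hm, hmin⟩ := S.exists_min_image y hne
  have hcard : S.card ≤ (Finset.range (⌊ρ / Δ⌋₊ + 1)).card := by
    refine Finset.card_le_card_of_injOn (fun i => ⌊(y i - y m) / Δ⌋₊) ?_ ?_
    · intro i hi
      simp only [Finset.coe_range, Set.mem_Iio]
      refine Nat.lt_succ_of_le (Nat.floor_le_floor ?_)
      gcongr
      exact (le_abs_self _).trans (hρ i hi m hm)
    · intro i hi j hj hij
      by_contra hne'
      have h1 := hsep i hi j hj hne'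
      have hi0 : 0 ≤ (y i - y m) / Δ := div_nonneg (sub_nonneg.2 (hmin i hi)) hΔ.le
      have hj0 : 0 ≤ (y j - y m) / Δ := div_nonneg (sub_nonneg.2 (hmin j hj)) hΔ.le
      have e1 := Nat.floor_le hi0
      have e2 := Nat.floor_le hj0
      have e3 := Nat.lt_floor_add_one ((y i - y m) / Δ)
      have e4 := Nat.lt_floor_add_one ((y j - y m) / Δ)
      simp only at hij
      rw [← hij] at e2 e4
      have h2 : |(y i - y m) / Δ - (y j - y m) / Δ| < 1 := by
        rw [abs_lt]; constructor <;> linarith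
      rw [← sub_div, sub_sub_sub_cancel_right, abs_div, abs_of_pos hΔ, div_lt_one hΔ] at h2
      linarith
  rw [Finset.card_range] at hcard
  calc (S.card : ℝ) ≤ ((⌊ρ / Δ⌋₊ + 1 : ℕ) : ℝ) := by exact_mod_cast hcard
    _ ≤ ρ / Δ + 1 := by
      push_cast
      gcongr
      exact Nat.floor_le (by positivity)

/-- Each index `i < M` receives mass at most `1 / M` from `[0, 1)` under `t ↦ ⌊t * M⌋₊`. -/
theorem volume_floor_mem_le {M : ℕ} (hM : 0 < M) (S : Finset ℕ) :
    volume {t : ℝ | t ∈ Ico (0 : ℝ) 1 ∧ ⌊t * M⌋₊ ∈ S} ≤ ENNReal.ofReal (S.card / M) := by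
  have hM' : (0 : ℝ) < M := by exact_mod_cast hM
  have hsub : {t : ℝ | t ∈ Ico (0 : ℝ) 1 ∧ ⌊t * M⌋₊ ∈ S} ⊆
      ⋃ i ∈ S, Ico ((i : ℝ) / M) ((i + 1 : ℝ) / M) := by
    rintro t ⟨ht, hS⟩
    simp only [mem_iUnion]
    refine ⟨_, hS, ?_, ?_⟩
    · rw [div_le_iff₀ hM']
      exact Nat.floor_le (mul_nonneg ht.1 hM'.le)
    · rw [lt_div_iff₀ hM']
      exact Nat.lt_floor_add_one _
  refine (measure_mono hsub).trans ((measure_biUnion_finset_le _ _).trans ?_)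
  simp only [Real.volume_Ico]
  rw [Finset.sum_congr rfl (g := fun _ => ENNReal.ofReal (1 / M))]
  · rw [Finset.sum_const, nsmul_eq_mul, ← ENNReal.ofReal_natCast, ← ENNReal.ofReal_mul (by positivity)]
    apply le_of_eq; congr 1; ring
  · intro i _
    congr 1
    ring

/-- Lower bound for the Hausdorff dimension of a set containing a homogeneous Cantor set.  The
level-`k` intervals are indexed by `i < M k`, the children of the interval `i` at level `k`
are the intervals `j` at level `k + 1` with `j / N k = i`, and siblings are `Δ`-separated.  The mass
distribution is the image of Lebesgue measure on `[0, 1)` under the map that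
sends `t` to the common point of the intervals of index `⌊t * M k⌋₊`. -/
theorem le_dimH_of_cantor {E : Set ℝ} {t : ℝ} (ht0 : 0 < t) (ht1 : t ≤ 1) (M N : ℕ → ℕ)
    (Δ : ℕ → ℝ) (a b : ℕ → ℕ → ℝ) (hM0 : M 0 = 1) (hM : ∀ k, M (k + 1) = M k * N k)
    (hN : ∀ k, 2 ≤ N k) (hab : ∀ k i, i < M k → a k i ≤ b k i)
    (hnest : ∀ k i, i < M (k + 1) → a k (i / N k) ≤ a (k + 1) i ∧ b (k + 1) i ≤ b k (i / N k))
    (hΔpos : ∀ k, 0 < Δ k) (hΔanti : Antitone Δ) (hΔ0 : Tendsto Δ atTop (𝓝 0))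
    (hsep : ∀ k i j, i < M (k + 1) → j < M (k + 1) → i ≠ j → i / N k = j / N k →
      ∀ x ∈ Icc (a (k + 1) i) (b (k + 1) i), ∀ y ∈ Icc (a (k + 1) j) (b (k + 1) j),
        Δ (k + 1) ≤ |x - y|)
    (hgrow : ∀ k, 1 ≤ k → 2 ≤ M k * (Δ (k + 1) * N k) ^ t)
    (hE : ∀ x, (∀ k, ∃ i < M k, x ∈ Icc (a k i) (b k i)) → x ∈ E) :
    ENNReal.ofReal t ≤ dimH E := by
  have hMpos : ∀ k, 0 < M k := by
    intro k
    induction k with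
    | zero => simp [hM0]
    | succ k ih => rw [hM]; exact Nat.mul_pos ih (by have := hN k; omega)
  have hMbig : ∀ k, 2 ^ k ≤ M k := by
    intro k
    induction k with
    | zero => simp [hM0]
    | succ k ih => rw [hM, pow_succ]; exact Nat.mul_le_mul ih (hN k)
  have hsepAll : ∀ k i j, i < M k → j < M k → i ≠ j →
      ∀ x ∈ Icc (a k i) (b k i), ∀ y ∈ Icc (a k j) (b k j), Δ k ≤ |x - y| := by
    intro k
    induction k with
    | zero => intro i j hi hj hij; rw [hM0] at hi hj; omega
    | succ k ih =>
      intro i j hi hj hij x hx y hy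
      by_cases hpar : i / N k = j / N k
      · exact hsep k i j hi hj hij hpar x hx y hy
      · have hNk : 0 < N k := by have := hN k; omega
        have hi' : i / N k < M k := by rw [Nat.div_lt_iff_lt_mul hNk, ← hM]; exact hi
        have hj' : j / N k < M k := by rw [Nat.div_lt_iff_lt_mul hNk, ← hM]; exact hj
        refine (hΔanti (Nat.le_succ k)).trans (ih _ _ hi' hj' hpar x ?_ y ?_)
        · exact ⟨(hnest k i hi).1.trans hx.1, hx.2.trans (hnest k i hi).2⟩
        · exact ⟨(hnest k j hj).1.trans hy.1, hy.2.trans (hnest k j hj).2⟩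
  set idx : ℕ → ℝ → ℕ := fun k s => ⌊s * M k⌋₊ with hidx
  have hidx_lt : ∀ k, ∀ s ∈ Ico (0 : ℝ) 1, idx k s < M k := by
    intro k s hs
    have hMk : (0 : ℝ) < M k := by exact_mod_cast hMpos k
    refine (Nat.floor_lt (mul_nonneg hs.1 hMk.le)).2 ?_
    nlinarith [hs.2]
  have hidx_succ : ∀ k s, idx (k + 1) s / N k = idx k s := by
    intro k s
    have hNk : (N k : ℝ) ≠ 0 := by have := hN k; positivity
    simp only [hidx]
    rw [← Nat.floor_div_natCast, hM]
    congr 1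
    push_cast
    field_simp
  have hstep : ∀ k, ∀ s ∈ Ico (0 : ℝ) 1, a k (idx k s) ≤ a (k + 1) (idx (k + 1) s) ∧
      b (k + 1) (idx (k + 1) s) ≤ b k (idx k s) := by
    intro k s hs
    have := hnest k _ (hidx_lt (k + 1) s hs)
    rwa [hidx_succ] at this
  have hmono_a : ∀ s ∈ Ico (0 : ℝ) 1, Monotone fun k => a k (idx k s) := fun s hs =>
    monotone_nat_of_le_succ fun k => (hstep k s hs).1
  have hanti_b : ∀ s ∈ Ico (0 : ℝ) 1, Antitone fun k => b k (idx k s) := fun s hs =>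
    antitone_nat_of_succ_le fun k => (hstep k s hs).2
  have hle : ∀ s ∈ Ico (0 : ℝ) 1, ∀ k l, a k (idx k s) ≤ b l (idx l s) := by
    intro s hs k l
    calc a k (idx k s) ≤ a (max k l) (idx (max k l) s) := hmono_a s hs (le_max_left _ _)
      _ ≤ b (max k l) (idx (max k l) s) := hab _ _ (hidx_lt _ s hs)
      _ ≤ b l (idx l s) := hanti_b s hs (le_max_right _ _)
  set π : ℝ → ℝ := fun s => ⨆ k, a k (idx k s) with hπ
  have hπmem : ∀ s ∈ Ico (0 : ℝ) 1, ∀ k, π s ∈ Icc (a k (idx k s)) (b k (idx k s)) := by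
    intro s hs k
    constructor
    · exact le_ciSup (f := fun k => a k (idx k s))
        ⟨b 0 (idx 0 s), by rintro _ ⟨l, rfl⟩; exact hle s hs l 0⟩ k
    · exact ciSup_le fun l => hle s hs l k
  have hπmeas : Measurable π := by
    refine Measurable.iSup fun k => ?_
    have h1 : Measurable (idx k) := Nat.measurable_floor.comp (measurable_id.mul_const _)
    exact (measurable_of_countable (a k)).comp h1
  set μ : Measure ℝ := (volume.restrict (Ico (0 : ℝ) 1)).map π with hμ
  -- the mass of a set is controlled by the number of level-`k` intervals it meets
  have hcount : ∀ (A : Set ℝ), IsClosed A → ∀ ρ : ℝ, 0 ≤ ρ →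
      (∀ x ∈ A, ∀ y ∈ A, |x - y| ≤ ρ) → ∀ k,
      μ A ≤ ENNReal.ofReal ((ρ / Δ k + 1) / M k) ∧
        (ρ < Δ k → μ A ≤ ENNReal.ofReal (1 / M k)) := by
    intro A hA ρ hρ0 hρ k
    classical
    set S : Finset ℕ := (Finset.range (M k)).filter
      (fun i => ∃ s ∈ Ico (0 : ℝ) 1, idx k s = i ∧ π s ∈ A) with hS
    have hSspec : ∀ i ∈ S, ∃ x ∈ A, x ∈ Icc (a k i) (b k i) := by
      intro i hi
      obtain ⟨s, hs, rfl, hsA⟩ := (Finset.mem_filter.1 hi).2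
      exact ⟨_, hsA, hπmem s hs k⟩
    choose! y hyA hyI using hSspec
    have hSlt : ∀ i ∈ S, i < M k := fun i hi => Finset.mem_range.1 (Finset.mem_filter.1 hi).1
    have hysep : ∀ i ∈ S, ∀ j ∈ S, i ≠ j → Δ k ≤ |y i - y j| := fun i hi j hj hij =>
      hsepAll k i j (hSlt i hi) (hSlt j hj) hij _ (hyI i hi) _ (hyI j hj)
    have hcard : (S.card : ℝ) ≤ ρ / Δ k + 1 :=
      card_le_of_separated S y (hΔpos k) hρ0
        (fun i hi j hj => hρ _ (hyA i hi) _ (hyA j hj)) hysep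
    have hμA : μ A ≤ ENNReal.ofReal (S.card / M k) := by
      rw [hμ, Measure.map_apply hπmeas hA.measurableSet,
        Measure.restrict_apply (hπmeas hA.measurableSet)]
      refine (measure_mono ?_).trans (volume_floor_mem_le (hMpos k) S)
      rintro s ⟨hsA, hs⟩
      exact ⟨hs, Finset.mem_filter.2 ⟨Finset.mem_range.2 (hidx_lt k s hs), s, hs, rfl, hsA⟩⟩
    refine ⟨hμA.trans (ENNReal.ofReal_le_ofReal (by gcongr)), fun hlt => hμA.trans
      (ENNReal.ofReal_le_ofReal ?_)⟩
    have hc1 : S.card ≤ 1 := by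
      rw [Finset.card_le_one]
      intro i hi j hj
      by_contra hij
      have := hysep i hi j hj hij
      have := hρ _ (hyA i hi) _ (hyA j hj)
      linarith
    have : (S.card : ℝ) ≤ 1 := by exact_mod_cast hc1
    gcongr
  have hμle : μ ≤ μH[t] := by
    refine Measure.le_hausdorffMeasure t μ (ENNReal.ofReal (Δ 1 / 2))
      (ENNReal.ofReal_pos.2 (by have := hΔpos 1; positivity)) fun A hA => ?_
    have hAfin : Metric.ediam A ≠ ⊤ := ne_top_of_le_ne_top ENNReal.ofReal_ne_top hA
    set ρ : ℝ := (Metric.ediam A).toReal with hρdef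
    have hρ0 : 0 ≤ ρ := ENNReal.toReal_nonneg
    have hρA : Metric.ediam A = ENNReal.ofReal ρ := (ENNReal.ofReal_toReal hAfin).symm
    have hρ1 : ρ < Δ 1 := by
      have h1 := hΔpos 1
      have : ρ ≤ Δ 1 / 2 := by
        rw [hρA] at hA
        exact (ENNReal.ofReal_le_ofReal_iff (by positivity)).1 hA
      linarith
    have hcl : ∀ x ∈ closure A, ∀ y ∈ closure A, |x - y| ≤ ρ := by
      intro x hx y hy
      have h1 := Metric.edist_le_ediam_of_mem hx hy
      rw [Metric.ediam_closure, hρA, edist_dist, ENNReal.ofReal_le_ofReal_iff hρ0, Real.dist_eq] at h1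
      exact h1
    refine (measure_mono (subset_closure (s := A))).trans ?_
    have hc := hcount (closure A) isClosed_closure ρ hρ0 hcl
    rcases hρ0.eq_or_lt with hz | hpos
    · -- sets of diameter zero are null since `M k → ∞`
      have hz' : μ (closure A) = 0 := by
        have hlim : Tendsto (fun k : ℕ => ENNReal.ofReal ((1 / 2 : ℝ) ^ k)) atTop (𝓝 0) := by
          have := ENNReal.tendsto_ofReal
            (tendsto_pow_atTop_nhds_zero_of_lt_one (r := (1 / 2 : ℝ)) (by norm_num) (by norm_num))
          simpa using this
        refine le_antisymm (ge_of_tendsto' hlim fun k => ?_) bot_le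
        refine ((hc k).2 (by rw [← hz]; exact hΔpos k)).trans (ENNReal.ofReal_le_ofReal ?_)
        rw [one_div_pow]
        have : ((2 : ℝ) ^ k) ≤ M k := by exact_mod_cast hMbig k
        gcongr
      rw [hz']
      exact bot_le
    · -- `k` is the level with `Δ (k + 1) ≤ ρ < Δ k`: the set meets one interval of level `k` and at
      -- most `2 ρ / Δ (k + 1)` intervals of level `k + 1`; these two bounds are interpolated
      have hex : ∃ k, Δ k ≤ ρ := ((hΔ0.eventually (gt_mem_nhds hpos)).exists).imp fun k hk => hk.le
      classical
      obtain ⟨k, hk1, hkρ, hρk⟩ : ∃ k, 1 ≤ k ∧ Δ (k + 1) ≤ ρ ∧ ρ < Δ k := by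
        have hspec := Nat.find_spec hex
        have hmin := fun m => Nat.find_min hex (m := m)
        have h2 : 2 ≤ Nat.find hex := by
          by_contra hlt
          have : Nat.find hex ≤ 1 := by omega
          have := hΔanti this
          linarith
        refine ⟨Nat.find hex - 1, by omega, ?_, ?_⟩
        · rwa [Nat.sub_add_cancel (by omega)]
        · exact not_le.1 (hmin _ (by omega))
      have hMk : (0 : ℝ) < M k := by exact_mod_cast hMpos k
      have hNk : (0 : ℝ) < N k := by have := hN k; positivity
      have hDk := hΔpos (k + 1)
      have hzpos : 0 < Δ (k + 1) * N k := by positivity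
      have b1 := (hc k).2 hρk
      have b2 := (hc (k + 1)).1
      have hbound : (ρ / Δ (k + 1) + 1) / M (k + 1) ≤ (1 / M k) * (2 * ρ / (Δ (k + 1) * N k)) := by
        have : ρ / Δ (k + 1) + 1 ≤ 2 * ρ / Δ (k + 1) := by
          have : 1 ≤ ρ / Δ (k + 1) := by rwa [le_div_iff₀ hDk, one_mul]
          rw [mul_div_assoc]; linarith
        rw [hM]; push_cast
        calc (ρ / Δ (k + 1) + 1) / (M k * N k) ≤ (2 * ρ / Δ (k + 1)) / (M k * N k) := by gcongr
          _ = _ := by field_simp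
      rw [hρA, ENNReal.ofReal_rpow_of_pos hpos]
      have hu0 : 0 < 2 * ρ / (Δ (k + 1) * N k) := by positivity
      have hmain : (1 / M k : ℝ) * (2 * ρ / (Δ (k + 1) * N k)) ^ t ≤ ρ ^ t := by
        rw [Real.div_rpow (by positivity) hzpos.le, Real.mul_rpow (by norm_num) hpos.le]
        have h2t : (2 : ℝ) ^ t ≤ 2 := by
          calc (2 : ℝ) ^ t ≤ 2 ^ (1 : ℝ) := Real.rpow_le_rpow_of_exponent_le (by norm_num) ht1
            _ = 2 := Real.rpow_one 2
        have hg := hgrow k hk1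
        have hρt : 0 < ρ ^ t := Real.rpow_pos_of_pos hpos t
        have hzt : 0 < (Δ (k + 1) * N k) ^ t := Real.rpow_pos_of_pos hzpos t
        rw [div_mul_div_comm, div_le_iff₀ (by positivity), one_mul]
        nlinarith
      by_cases hu : 2 * ρ / (Δ (k + 1) * N k) ≤ 1
      · refine b2.trans (ENNReal.ofReal_le_ofReal (hbound.trans (le_trans ?_ hmain)))
        gcongr
        calc 2 * ρ / (Δ (k + 1) * N k) = (2 * ρ / (Δ (k + 1) * N k)) ^ (1 : ℝ) := (Real.rpow_one _).symm
          _ ≤ _ := Real.rpow_le_rpow_of_exponent_ge hu0 hu ht1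
      · refine b1.trans (ENNReal.ofReal_le_ofReal (le_trans ?_ hmain))
        have : 1 ≤ (2 * ρ / (Δ (k + 1) * N k)) ^ t := Real.one_le_rpow (not_le.1 hu).le ht0.le
        have h0 : (0 : ℝ) ≤ 1 / M k := by positivity
        nlinarith
  have hμE : 1 ≤ μ E := by
    calc (1 : ℝ≥0∞) = volume.restrict (Ico (0 : ℝ) 1) (Ico (0 : ℝ) 1) := by simp
      _ ≤ volume.restrict (Ico (0 : ℝ) 1) (π ⁻¹' E) :=
        measure_mono fun s hs => hE _ fun k => ⟨idx k s, hidx_lt k s hs, hπmem s hs k⟩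
      _ ≤ μ E := Measure.le_map_apply hπmeas.aemeasurable E
  have hne : μH[((⟨t, ht0.le⟩ : ℝ≥0) : ℝ)] E ≠ 0 := by
    have h1 : 1 ≤ μH[t] E := hμE.trans (hμle E)
    exact (lt_of_lt_of_le zero_lt_one h1).ne'
  have := le_dimH_of_hausdorffMeasure_ne_zero hne
  rwa [ENNReal.ofReal, Real.toNNReal_of_nonneg ht0.le]

/-! ### The natural cover of `W(Ψ)` -/

/-- Each denominator admits only finitely many numerators, so the approximants of a point of `W(Ψ)`
have unbounded denominators. -/
theorem exists_large_denominator {Ψ : ℝ → ℝ} {x : ℝ} (hx : x ∈ WSet Ψ) (m : ℕ) :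
    ∃ (p : ℤ) (q : ℕ), m ≤ q ∧ 0 < q ∧ |x - (p : ℝ) / q| ≤ Ψ q := by
  by_contra! hcon
  refine hx (Set.Finite.subset (s := ⋃ q ∈ Finset.range m,
    (fun p : ℤ => (p, q)) '' Icc ⌊(q : ℝ) * (x - Ψ q)⌋ ⌈(q : ℝ) * (x + Ψ q)⌉) ?_ ?_)
  · exact Set.Finite.biUnion (Finset.range m).finite_toSet fun q _ => (Set.finite_Icc _ _).image _
  · rintro ⟨p, q⟩ ⟨hq, hpq⟩
    simp only at hq hpq
    have hqm : q < m := by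
      by_contra hlt
      exact absurd hpq (not_le.2 (hcon p q (not_lt.1 hlt) hq))
    simp only [mem_iUnion]
    refine ⟨q, by simpa using hqm, p, ?_, rfl⟩
    have hq' : (0 : ℝ) < q := by exact_mod_cast hq
    rw [abs_le] at hpq
    have e : (p : ℝ) = q * ((p : ℝ) / q) := by field_simp
    constructor
    · have : (⌊(q : ℝ) * (x - Ψ q)⌋ : ℝ) ≤ p := by
        refine (Int.floor_le _).trans ?_
        rw [e]; gcongr; linarith
      exact_mod_cast this
    · have : (p : ℝ) ≤ ⌈(q : ℝ) * (x + Ψ q)⌉ := by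
        refine le_trans ?_ (Int.le_ceil _)
        rw [e]; gcongr; linarith
      exact_mod_cast this

/-- For every `m`, `W(Ψ) ∩ [-n, n]` is covered by the balls of radius `q^(-2/s)` around fractions
of denominator `q ≥ m`; their total `d`-cost is the tail of `∑ q^(1 - 2d/s)`, which converges. -/
theorem hausdorffMeasure_WSet_inter_eq_zero {Ψ : ℝ → ℝ} {s d : ℝ} (hs : 0 < s) (hsd : s < d)
    (hΨ : ∀ᶠ q : ℕ in atTop, Ψ q ≤ (q : ℝ) ^ (-2 / s)) (n : ℕ) :
    μH[d] (WSet Ψ ∩ Icc (-n : ℝ) n) = 0 := by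
  have hd : 0 < d := hs.trans hsd
  set f : ℕ → ℝ := fun q => (2 * (n + 1) + 1) * 2 ^ d * (q : ℝ) ^ (1 - 2 * d / s) with hf
  have hfsum : Summable f := by
    refine Summable.mul_left _ (Real.summable_nat_rpow.2 ?_)
    have : 1 < d / s := by rwa [lt_div_iff₀ hs, one_mul]
    have : 2 * d / s = 2 * (d / s) := by ring
    linarith
  set c : ℕ → ℝ := fun q => (q : ℝ) ^ (-2 / s) with hc
  have hc0 : ∀ q, 0 ≤ c q := fun q => by positivity
  have hcm : Tendsto (fun m : ℕ => ENNReal.ofReal (2 * c m)) atTop (𝓝 0) := by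
    have h1 : Tendsto c atTop (𝓝 0) := by
      have h2 := (tendsto_rpow_neg_atTop (y := 2 / s) (by positivity)).comp
        tendsto_natCast_atTop_atTop
      refine h2.congr fun q => ?_
      simp only [hc, Function.comp_apply, neg_div]
    have := ENNReal.tendsto_ofReal (h1.const_mul 2)
    simpa using this
  have hcanti : ∀ m k : ℕ, 1 ≤ m → c (k + m) ≤ c m := by
    intro m k hm
    have hm' : (0 : ℝ) < m := by exact_mod_cast hm
    simp only [hc]
    refine Real.rpow_le_rpow_of_nonpos hm' (by push_cast; linarith [k.cast_nonneg (α := ℝ)]) ?_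
    rw [neg_div]; have : 0 < 2 / s := by positivity
    linarith
  -- the index `(k, i)` stands for the fraction with denominator `q = k + m` and numerator
  -- `i - (n + 1) q`, so that the numerators run through `[-(n + 1) q, (n + 1) q]`
  let ι : ℕ → Type := fun m => Σ k : ℕ, Fin (2 * (n + 1) * (k + m) + 1)
  let T : ∀ m : ℕ, ι m → Set ℝ := fun m i =>
    Metric.closedBall ((((i.2 : ℕ) : ℝ) - (n + 1) * (i.1 + m : ℕ)) / (i.1 + m : ℕ)) (c (i.1 + m))
  have hTd : ∀ m (i : ι m), Metric.ediam (T m i) ≤ ENNReal.ofReal (2 * c (i.1 + m)) := by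
    intro m i
    simp only [T]
    rw [Real.closedBall_eq_Icc, Real.ediam_Icc]
    apply ENNReal.ofReal_le_ofReal
    linarith
  have hcov : ∀ᶠ m : ℕ in atTop, WSet Ψ ∩ Icc (-n : ℝ) n ⊆ ⋃ i, T m i := by
    obtain ⟨m0, hm0⟩ := eventually_atTop.1 hΨ
    filter_upwards [eventually_ge_atTop (max m0 1)] with m hm
    rintro x ⟨hxW, hx⟩
    obtain ⟨p, q, hmq, hq, hpq⟩ := exists_large_denominator hxW m
    have hq' : (0 : ℝ) < q := by exact_mod_cast hq
    have hq1 : (1 : ℝ) ≤ q := by exact_mod_cast hq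
    have hpc : |x - (p : ℝ) / q| ≤ c q := hpq.trans (hm0 q (by omega))
    have hc1 : c q ≤ 1 := by
      simp only [hc]
      refine Real.rpow_le_one_of_one_le_of_nonpos hq1 ?_
      rw [neg_div]; have : 0 < 2 / s := by positivity
      linarith
    have hab := abs_le.1 (hpc.trans hc1)
    have e : (p : ℝ) = q * ((p : ℝ) / q) := by field_simp
    have hlo : -((n : ℝ) + 1) * q ≤ p := by
      rw [e]; nlinarith [hx.1]
    have hhi : (p : ℝ) ≤ (n + 1) * q := by
      rw [e]; nlinarith [hx.2]
    have hlo' : -((n : ℤ) + 1) * q ≤ p := by exact_mod_cast hlo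
    have hhi' : p ≤ ((n : ℤ) + 1) * q := by exact_mod_cast hhi
    rw [mem_iUnion]
    refine ⟨⟨q - m, ⟨(p + (n + 1) * q).toNat, ?_⟩⟩, ?_⟩
    · have : q - m + m = q := by omega
      rw [this]
      have h3 : ((2 * (n + 1) * q + 1 : ℕ) : ℤ) = 2 * (n + 1) * q + 1 := by push_cast; ring
      zify
      rw [Int.toNat_of_nonneg (by linarith)]
      linarith
    · simp only [T, Metric.mem_closedBall, Real.dist_eq]
      have hqm : q - m + m = q := by omega
      rw [hqm]
      have h4 : (((p + (n + 1) * q).toNat : ℕ) : ℝ) = p + (n + 1) * q := by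
        have : (((p + (n + 1) * q).toNat : ℕ) : ℤ) = p + (n + 1) * q :=
          Int.toNat_of_nonneg (by linarith)
        exact_mod_cast this
      rw [h4]
      simpa using hpc
  have hle := Measure.hausdorffMeasure_le_liminf_tsum d (WSet Ψ ∩ Icc (-n : ℝ) n)
    (fun m : ℕ => ENNReal.ofReal (2 * c m)) hcm T
    (by
      filter_upwards [eventually_ge_atTop 1] with m hm i
      refine (hTd m i).trans (ENNReal.ofReal_le_ofReal ?_)
      have := hcanti m i.1 hm
      linarith) hcov
  refine le_antisymm (hle.trans ?_) bot_le
  have hsum : ∀ m : ℕ, 1 ≤ m → ∑' i : ι m, Metric.ediam (T m i) ^ d ≤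
      ∑' k : ℕ, ENNReal.ofReal (f (k + m)) := by
    intro m hm
    rw [ENNReal.tsum_sigma']
    refine ENNReal.tsum_le_tsum fun k => ?_
    have hkm : (1 : ℝ) ≤ ((k + m : ℕ) : ℝ) := by exact_mod_cast (by omega : 1 ≤ k + m)
    have hkm0 : (0 : ℝ) < ((k + m : ℕ) : ℝ) := by linarith
    calc ∑' b : Fin (2 * (n + 1) * (k + m) + 1), Metric.ediam (T m ⟨k, b⟩) ^ d
        ≤ ∑' b : Fin (2 * (n + 1) * (k + m) + 1), ENNReal.ofReal ((2 * c (k + m)) ^ d) := by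
          refine ENNReal.tsum_le_tsum fun b => ?_
          rw [← ENNReal.ofReal_rpow_of_nonneg (by have := hc0 (k + m); linarith) hd.le]
          exact ENNReal.rpow_le_rpow (hTd m ⟨k, b⟩) hd.le
      _ = ENNReal.ofReal ((2 * (n + 1) * (k + m : ℕ) + 1) * (2 * c (k + m)) ^ d) := by
          rw [tsum_fintype, Finset.sum_const, Finset.card_univ, Fintype.card_fin, nsmul_eq_mul,
            ← ENNReal.ofReal_natCast, ← ENNReal.ofReal_mul (by positivity)]
          congr 1
          push_cast
          ring
      _ ≤ ENNReal.ofReal (f (k + m)) := by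
          apply ENNReal.ofReal_le_ofReal
          simp only [hf]
          rw [Real.mul_rpow (by norm_num) (hc0 _)]
          have e1 : c (k + m) ^ d * ((k + m : ℕ) : ℝ) = ((k + m : ℕ) : ℝ) ^ (1 - 2 * d / s) := by
            simp only [hc]
            rw [← Real.rpow_mul hkm0.le]
            nth_rewrite 2 [← Real.rpow_one ((k + m : ℕ) : ℝ)]
            rw [← Real.rpow_add hkm0]
            congr 1
            ring
          rw [← e1]
          have h5 : 0 ≤ 2 ^ d * c (k + m) ^ d :=
            mul_nonneg (by positivity) (Real.rpow_nonneg (hc0 _) _)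
          have h6 : (2 * ((n : ℝ) + 1) * (k + m : ℕ) + 1) ≤ (2 * (n + 1) + 1) * (k + m : ℕ) := by
            nlinarith
          calc (2 * ((n : ℝ) + 1) * (k + m : ℕ) + 1) * (2 ^ d * c (k + m) ^ d)
              ≤ ((2 * (n + 1) + 1) * (k + m : ℕ)) * (2 ^ d * c (k + m) ^ d) :=
                mul_le_mul_of_nonneg_right h6 h5
            _ = _ := by ring
  have hfin : ∑' q, ENNReal.ofReal (f q) ≠ ∞ := hfsum.tsum_ofReal_ne_top
  have htail := ENNReal.tendsto_sum_nat_add (fun q => ENNReal.ofReal (f q)) hfin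
  calc liminf (fun m => ∑' i : ι m, Metric.ediam (T m i) ^ d) atTop
      ≤ liminf (fun m => ∑' k : ℕ, ENNReal.ofReal (f (k + m))) atTop := by
        refine liminf_le_liminf ?_
        filter_upwards [eventually_ge_atTop 1] with m hm using hsum m hm
    _ = 0 := htail.liminf_eq

/-- Upper bound for the dimension of `W(Ψ)`; in contrapositive form, `s < dim W(Ψ)` forces
`Ψ(q) > q^(-2/s)` for infinitely many `q`. -/
theorem dimH_WSet_le {Ψ : ℝ → ℝ} {s : ℝ} (hs : 0 < s)
    (hΨ : ∀ᶠ q : ℕ in atTop, Ψ q ≤ (q : ℝ) ^ (-2 / s)) : dimH (WSet Ψ) ≤ ENNReal.ofReal s := by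
  have hcov : WSet Ψ = ⋃ n : ℕ, WSet Ψ ∩ Icc (-n : ℝ) n := by
    rw [← inter_iUnion, eq_comm, inter_eq_left]
    intro x _
    obtain ⟨n, hn⟩ := exists_nat_ge |x|
    exact mem_iUnion.2 ⟨n, abs_le.1 hn⟩
  rw [hcov, dimH_iUnion]
  refine iSup_le fun n => le_of_forall_gt fun e he => ?_
  obtain ⟨d, hd1, hd2⟩ := ENNReal.lt_iff_exists_nnreal_btwn.1 he
  have hsd : s < d := by
    have := (ENNReal.ofReal_lt_iff_lt_toReal hs.le ENNReal.coe_ne_top).1 hd1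
    simpa using this
  refine lt_of_le_of_lt (dimH_le_of_hausdorffMeasure_ne_top (d := d) ?_) hd2
  rw [hausdorffMeasure_WSet_inter_eq_zero hs hsd hΨ n]
  exact ENNReal.zero_ne_top

/-! ### Consequences of monotonicity and summability -/

/-- A congruence `p * s + k ≡ 0 (mod q)` has at most `gcd q s` solutions `p < q`, and none unless
`gcd q s ∣ k`; the right-hand side sums over all common divisors to make later sums factor. -/
theorem card_solutions_le (q s k : ℕ) (hq : 0 < q) :
    ((Finset.range q).filter fun p => q ∣ p * s + k).card ≤
      ∑ d ∈ q.divisors, if d ∣ s ∧ d ∣ k then d else 0 := by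
  rcases ((Finset.range q).filter fun p => q ∣ p * s + k).eq_empty_or_nonempty with h | ⟨p₀, hp₀⟩
  · rw [h]; simp
  rw [Finset.mem_filter] at hp₀
  set e := Nat.gcd q s with he
  have he0 : 0 < e := Nat.gcd_pos_of_pos_left _ hq
  have hes : e ∣ s := Nat.gcd_dvd_right _ _
  have heq : e ∣ q := Nat.gcd_dvd_left _ _
  have hek : e ∣ k := (Nat.dvd_add_right (hes.mul_left p₀)).1 (heq.trans hp₀.2)
  have hterm : (if e ∣ s ∧ e ∣ k then e else 0) = e := if_pos ⟨hes, hek⟩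
  calc _ ≤ (Finset.range e).card := by
        refine Finset.card_le_card_of_injOn (fun p => p / (q / e)) ?_ ?_
        · intro p hp
          simp only [Finset.coe_filter, Finset.mem_range, mem_ofPred_eq] at hp
          simp only [Finset.coe_range, mem_Iio]
          rw [Nat.div_lt_iff_lt_mul (Nat.div_pos (Nat.le_of_dvd hq heq) he0), Nat.mul_div_cancel' heq]
          exact hp.1
        · intro p hp p' hp' hpp
          simp only [Finset.coe_filter, Finset.mem_range, mem_ofPred_eq] at hp hp'
          simp only at hpp
          have h1 : p * s + k ≡ p' * s + k [MOD q] :=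
            ((Nat.modEq_zero_iff_dvd.2 hp.2).trans (Nat.modEq_zero_iff_dvd.2 hp'.2).symm)
          have h2 : p * s ≡ p' * s [MOD q] := Nat.ModEq.add_right_cancel' _ h1
          have h3 : p ≡ p' [MOD q / e] := h2.cancel_right_div_gcd hq
          rw [← Nat.div_add_mod p (q / e), ← Nat.div_add_mod p' (q / e), hpp, h3]
    _ = e := Finset.card_range e
    _ ≤ _ := by
        conv_lhs => rw [← hterm]
        exact Finset.single_le_sum (f := fun d => if d ∣ s ∧ d ∣ k then d else 0)
          (fun _ _ => Nat.zero_le _) (Nat.mem_divisors.2 ⟨heq, hq.ne'⟩)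

/-- The part of the hypotheses used in the counting arguments, restricted to integers. -/
structure ApproxData (ψ w : ℕ → ℝ) : Prop where
  pos : ∀ q, 1 ≤ q → 0 < ψ q
  wpos : ∀ q, 1 ≤ q → 0 < w q
  anti : ∀ q r : ℕ, 1 ≤ q → q ≤ r → (r : ℝ) ^ 2 * ψ r ≤ (q : ℝ) ^ 2 * ψ q
  summ : Summable fun q : ℕ => (q : ℝ) * ψ q
  wlim : Tendsto w atTop (𝓝 0)
  wslow : ∀ ε : ℝ, 0 < ε → ∀ᶠ q : ℕ in atTop, (q : ℝ) ^ (-ε) ≤ w q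

/-- `N` is a threshold beyond which `w` and `q² ψ(q)` are small. -/
structure Threshold (ψ w : ℕ → ℝ) (N : ℕ) : Prop where
  one_le : 1 ≤ N
  wle : ∀ s, N ≤ s → w s ≤ 1 / 4
  gle : ∀ s : ℕ, N ≤ s → (s : ℝ) ^ 2 * ψ s ≤ 1 / 100

/-- A bound for `∑ₖ g(k q) / k`, where `g(s) = s² ψ(s)` (see `ApproxData.sum_g_mul_le`); it tends
to `0` as `q → ∞`. -/
noncomputable def hsum (ψ : ℕ → ℝ) (q : ℕ) : ℝ :=
  (q : ℝ) ^ 2 * ψ q + ∑' s : ℕ, ((s + (q + 1) : ℕ) : ℝ) * ψ (s + (q + 1))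

section
variable {ψ w : ℕ → ℝ}

theorem ApproxData.psi_anti (H : ApproxData ψ w) {q r : ℕ} (hq : 1 ≤ q) (hqr : q ≤ r) :
    ψ r ≤ ψ q := by
  have h := H.anti q r hq hqr
  have h1 : (q : ℝ) ^ 2 * ψ r ≤ (r : ℝ) ^ 2 * ψ r := by
    have := (H.pos r (hq.trans hqr)).le
    gcongr
  have hq' : (0 : ℝ) < (q : ℝ) ^ 2 := by positivity
  exact le_of_mul_le_mul_left (h1.trans h) hq'

theorem ApproxData.g_tendsto (H : ApproxData ψ w) :
    Tendsto (fun q : ℕ => (q : ℝ) ^ 2 * ψ q) atTop (𝓝 0) := by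
  rw [Metric.tendsto_atTop]
  intro ε hε
  by_contra! hcon
  -- monotonicity would keep `g ≥ ε` everywhere, against the divergence of the harmonic series
  have hge : ∀ q : ℕ, 1 ≤ q → ε ≤ (q : ℝ) ^ 2 * ψ q := by
    intro q hq
    obtain ⟨r, hr, hr'⟩ := hcon q
    have h := H.anti q r hq hr
    have hp := H.pos r (hq.trans hr)
    rw [Real.dist_eq, sub_zero, abs_of_nonneg (by positivity)] at hr'
    exact hr'.trans h
  have : Summable fun q : ℕ => ε * (1 / (q : ℝ)) := by
    refine Summable.of_nonneg_of_le (fun q => by positivity) (fun q => ?_) H.summ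
    rcases Nat.eq_zero_or_pos q with rfl | hq
    · simp
    have hq' : (0 : ℝ) < q := by exact_mod_cast hq
    rw [mul_one_div, div_le_iff₀ hq']
    calc ε ≤ _ := hge q hq
      _ = _ := by ring
  exact Real.not_summable_one_div_natCast ((summable_mul_left_iff hε.ne').1 this)

theorem ApproxData.hsum_tendsto (H : ApproxData ψ w) : Tendsto (hsum ψ) atTop (𝓝 0) := by
  have h1 := H.g_tendsto
  have h2 := (tendsto_sum_nat_add fun q : ℕ => (q : ℝ) * ψ q).comp (tendsto_add_atTop_nat 1)
  have := h1.add h2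
  rw [add_zero] at this
  exact this

theorem ApproxData.term_nonneg (H : ApproxData ψ w) (s : ℕ) : 0 ≤ (s : ℝ) * ψ s := by
  rcases Nat.eq_zero_or_pos s with rfl | hs
  · simp
  · have := H.pos s hs; positivity

theorem ApproxData.hsum_nonneg (H : ApproxData ψ w) (q : ℕ) : 0 ≤ hsum ψ q := by
  unfold hsum
  have h1 : 0 ≤ (q : ℝ) ^ 2 * ψ q := by
    have := H.term_nonneg q
    calc 0 ≤ (q : ℝ) * (q * ψ q) := by positivity
      _ = _ := by ring
  have h2 : 0 ≤ ∑' s : ℕ, ((s + (q + 1) : ℕ) : ℝ) * ψ (s + (q + 1)) :=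
    tsum_nonneg fun s => H.term_nonneg _
  linarith

theorem ApproxData.sum_g_mul_le (H : ApproxData ψ w) (q : ℕ) (hq : 1 ≤ q) (K : ℕ) :
    ∑ k ∈ Finset.range K, ((k * q : ℕ) : ℝ) ^ 2 * ψ (k * q) / k ≤ hsum ψ q := by
  -- the terms `k ≥ 2` are bounded by the block sums of `s ψ(s)` over `((k - 1) q, k q]`
  have key : ∀ K : ℕ, ∑ k ∈ Finset.range (K + 2), ((k * q : ℕ) : ℝ) ^ 2 * ψ (k * q) / k ≤
      (q : ℝ) ^ 2 * ψ q +
        ∑ s ∈ Finset.range (K * q), ((s + (q + 1) : ℕ) : ℝ) * ψ (s + (q + 1)) := by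
    intro K
    induction K with
    | zero => simp [Finset.sum_range_succ]
    | succ K ih =>
      rw [Finset.sum_range_succ, Nat.succ_mul K q, Finset.sum_range_add _ (K * q) q, ← add_assoc]
      refine add_le_add ih ?_
      have hb : ∀ x ∈ Finset.range q, ((((K + 2) * q : ℕ) : ℝ) ^ 2 * ψ ((K + 2) * q) / ((K + 2 : ℕ) : ℝ)) / q ≤
          ((K * q + x + (q + 1) : ℕ) : ℝ) * ψ (K * q + x + (q + 1)) := by
        intro x hx
        rw [Finset.mem_range] at hx
        set s := K * q + x + (q + 1) with hs
        have hs1 : 1 ≤ s := by omega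
        have hsle : s ≤ (K + 2) * q := by
          have : (K + 2) * q = K * q + q + q := by ring
          omega
        have h1 := H.anti s _ hs1 hsle
        have hs0 : (0 : ℝ) < s := by exact_mod_cast hs1
        have hq0 : (0 : ℝ) < q := by exact_mod_cast hq
        have hp := H.pos s hs1
        rw [div_div, div_le_iff₀ (by positivity)]
        refine h1.trans ?_
        have h2 : (s : ℝ) ≤ ((K + 2 : ℕ) : ℝ) * q := by exact_mod_cast hsle
        calc (s : ℝ) ^ 2 * ψ s = s * ψ s * s := by ring
          _ ≤ s * ψ s * (((K + 2 : ℕ) : ℝ) * q) := by gcongr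
      have := Finset.sum_le_sum hb
      rw [Finset.sum_const, Finset.card_range, nsmul_eq_mul] at this
      have hq0 : (q : ℝ) ≠ 0 := by positivity
      rw [mul_div_cancel₀ _ hq0] at this
      exact this
  have hsummable : Summable fun s : ℕ => ((s + (q + 1) : ℕ) : ℝ) * ψ (s + (q + 1)) :=
    (summable_nat_add_iff (q + 1)).2 H.summ
  calc _ ≤ ∑ k ∈ Finset.range (K + 2), ((k * q : ℕ) : ℝ) ^ 2 * ψ (k * q) / k := by
        refine Finset.sum_le_sum_of_subset_of_nonneg (by simp) fun k _ _ => ?_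
        have := H.term_nonneg (k * q)
        have e : ((k * q : ℕ) : ℝ) ^ 2 * ψ (k * q) = ((k * q : ℕ) : ℝ) * (((k * q : ℕ) : ℝ) * ψ (k * q)) := by
          ring
        rw [e]; positivity
    _ ≤ _ := key K
    _ ≤ _ := by
        unfold hsum
        gcongr
        exact hsummable.sum_le_tsum _ fun s _ => H.term_nonneg _
end

/-! ### Overlap of shells with fractions of larger denominator -/

/-- The right half-shell `{y : (1 - w(q)) ψ(q) ≤ y - p/q ≤ ψ(q)}` of the rational `p/q`. -/
def shell (ψ w : ℕ → ℝ) (p q : ℕ) : Set ℝ :=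
  Icc ((p : ℝ) / q + (1 - w q) * ψ q) ((p : ℝ) / q + ψ q)

/-- The union of the balls of radius `2 ψ(s)` around rationals `r/s > p/q` with `s > q`; the
numerator is encoded through `k = r q - p s ≥ 1`, so that `r/s = p/q + k/(q s)`. -/
def obstacle (ψ : ℕ → ℝ) (p q : ℕ) : Set ℝ :=
  {y | ∃ s k : ℕ, q < s ∧ 1 ≤ k ∧ q ∣ p * s + k ∧
    |y - ((p : ℝ) / q + (k : ℝ) / (q * s))| < 2 * ψ s}

open Classical in
/-- An upper bound for the length of the intersection of a shell of denominator `q` with the ball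
of radius `2 ψ(s)` at distance `k/(q s)` from the centre of the shell. -/
noncomputable def overlap (ψ w : ℕ → ℝ) (q s k : ℕ) : ℝ≥0∞ :=
  if q < s ∧ 1 ≤ k ∧ |(k : ℝ) / (q * s) - ψ q| < 2 * ψ s + w q * ψ q then
    ENNReal.ofReal (min (w q * ψ q) (4 * ψ s)) else 0

theorem volume_shell_inter_obstacle_le (ψ w : ℕ → ℝ) (p q : ℕ) (hw : 0 ≤ w q * ψ q) :
    volume (shell ψ w p q ∩ obstacle ψ p q) ≤
      ∑' k : ℕ, ∑' s : ℕ, if q ∣ p * s + k then overlap ψ w q s k else 0 := by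
  have hsub : shell ψ w p q ∩ obstacle ψ p q ⊆
      ⋃ k : ℕ, ⋃ s : ℕ, {y | y ∈ shell ψ w p q ∧ q < s ∧ 1 ≤ k ∧ q ∣ p * s + k ∧
        |y - ((p : ℝ) / q + (k : ℝ) / (q * s))| < 2 * ψ s} := by
    rintro y ⟨hy, s, k, h1, h2, h3, h4⟩
    simp only [mem_iUnion]
    exact ⟨k, s, hy, h1, h2, h3, h4⟩
  refine (measure_mono hsub).trans ((measure_iUnion_le _).trans (ENNReal.tsum_le_tsum fun k =>
    (measure_iUnion_le _).trans (ENNReal.tsum_le_tsum fun s => ?_)))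
  rcases Set.eq_empty_or_nonempty {y | y ∈ shell ψ w p q ∧ q < s ∧ 1 ≤ k ∧ q ∣ p * s + k ∧
        |y - ((p : ℝ) / q + (k : ℝ) / (q * s))| < 2 * ψ s} with h | ⟨y, hy, h1, h2, h3, h4⟩
  · rw [h]; simp
  have hhit : |(k : ℝ) / (q * s) - ψ q| < 2 * ψ s + w q * ψ q := by
    rw [abs_lt] at h4 ⊢
    obtain ⟨hy1, hy2⟩ := hy
    constructor <;> nlinarith
  rw [if_pos h3, overlap, if_pos ⟨h1, h2, hhit⟩, ENNReal.ofReal_min]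
  refine le_min ?_ ?_
  · refine (measure_mono (t := shell ψ w p q) fun y hy => hy.1).trans ?_
    rw [shell, Real.volume_Icc]
    exact ENNReal.ofReal_le_ofReal (by linarith)
  · refine (measure_mono (t := Metric.ball ((p : ℝ) / q + (k : ℝ) / (q * s)) (2 * ψ s))
      fun y hy => by simpa [Real.dist_eq] using hy.2.2.2.2).trans ?_
    rw [Real.volume_ball]
    exact ENNReal.ofReal_le_ofReal (by linarith)

theorem tsum_dvd_eq (d : ℕ) (hd : 0 < d) (f : ℕ → ℝ≥0∞) :
    (∑' s, if d ∣ s then f s else 0) = ∑' s, f (d * s) := by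
  have hinj : Function.Injective fun s : ℕ => d * s := fun a b h => Nat.eq_of_mul_eq_mul_left hd h
  have := hinj.tsum_eq (f := fun s => if d ∣ s then f s else 0) (by
    intro s hs
    rw [Function.mem_support] at hs
    by_cases h : d ∣ s
    · obtain ⟨t, rfl⟩ := h; exact ⟨t, rfl⟩
    · simp [h] at hs)
  rw [← this]
  simp

/-- Summing over the numerators `p < q`: for given `s` and `k`, the number of `p` with
`q ∣ p * s + k` is bounded by a sum over the common divisors `d` of `q`, `s` and `k`, and `s`, `k`
are then replaced by `d * s`, `d * k`. -/
theorem sum_volume_le_sum_divisors (ψ w : ℕ → ℝ) (q : ℕ) (hq : 0 < q) (hw : 0 ≤ w q * ψ q) :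
    ∑ p ∈ Finset.range q, volume (shell ψ w p q ∩ obstacle ψ p q) ≤
      ∑ d ∈ q.divisors, ∑' k : ℕ, ∑' s : ℕ, (d : ℝ≥0∞) * overlap ψ w q (d * s) (d * k) := by
  calc _ ≤ ∑ p ∈ Finset.range q, ∑' k : ℕ, ∑' s : ℕ,
        (if q ∣ p * s + k then overlap ψ w q s k else 0) :=
        Finset.sum_le_sum fun p _ => volume_shell_inter_obstacle_le ψ w p q hw
    _ = ∑' k : ℕ, ∑' s : ℕ, ∑ p ∈ Finset.range q,
        (if q ∣ p * s + k then overlap ψ w q s k else 0) := by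
        rw [← Summable.tsum_finsetSum fun _ _ => ENNReal.summable]
        refine tsum_congr fun k => ?_
        rw [← Summable.tsum_finsetSum fun _ _ => ENNReal.summable]
    _ ≤ ∑' k : ℕ, ∑' s : ℕ, ∑ d ∈ q.divisors,
        (if d ∣ k then if d ∣ s then (d : ℝ≥0∞) * overlap ψ w q s k else 0 else 0) := by
        refine ENNReal.tsum_le_tsum fun k => ENNReal.tsum_le_tsum fun s => ?_
        rw [← Finset.sum_filter, Finset.sum_const, nsmul_eq_mul]
        have h := card_solutions_le q s k hq
        calc _ ≤ ((∑ d ∈ q.divisors, if d ∣ s ∧ d ∣ k then d else 0 : ℕ) : ℝ≥0∞) *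
              overlap ψ w q s k := by gcongr
          _ = _ := by
            rw [Nat.cast_sum, Finset.sum_mul]
            refine Finset.sum_congr rfl fun d _ => ?_
            by_cases h1 : d ∣ k <;> by_cases h2 : d ∣ s <;> simp [h1, h2]
    _ = ∑ d ∈ q.divisors, ∑' k : ℕ, ∑' s : ℕ,
        (if d ∣ k then if d ∣ s then (d : ℝ≥0∞) * overlap ψ w q s k else 0 else 0) := by
        rw [← Summable.tsum_finsetSum fun _ _ => ENNReal.summable]
        refine tsum_congr fun k => ?_
        rw [← Summable.tsum_finsetSum fun _ _ => ENNReal.summable]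
    _ = _ := by
        refine Finset.sum_congr rfl fun d hd => ?_
        have hd0 : 0 < d := Nat.pos_of_mem_divisors hd
        rw [← tsum_dvd_eq d hd0 fun k => ∑' s : ℕ, (d : ℝ≥0∞) * overlap ψ w q (d * s) k]
        refine tsum_congr fun k => ?_
        by_cases h1 : d ∣ k
        · simp only [h1, if_true]
          exact tsum_dvd_eq d hd0 fun s => (d : ℝ≥0∞) * overlap ψ w q s k
        · simp [h1]

/-- A sum of terms at most `B`, supported in a window of radius `L`. -/
theorem tsum_window_le (f : ℕ → ℝ≥0∞) (c L : ℝ) (hc : 0 ≤ c) (hL : 0 ≤ L) (B : ℝ≥0∞)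
    (hf : ∀ s, f s ≠ 0 → |(s : ℝ) - c| ≤ L) (hB : ∀ s, f s ≤ B) :
    ∑' s, f s ≤ ENNReal.ofReal (2 * L + 1) * B := by
  have hsupp : ∀ s ∉ Finset.Icc ⌈c - L⌉₊ ⌊c + L⌋₊, f s = 0 := by
    intro s hs
    by_contra h
    have := abs_le.1 (hf s h)
    refine hs (Finset.mem_Icc.2 ⟨Nat.ceil_le.2 (by linarith), Nat.le_floor (by linarith)⟩)
  rw [tsum_eq_sum hsupp]
  refine (Finset.sum_le_card_nsmul _ _ B fun s _ => hB s).trans ?_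
  rw [nsmul_eq_mul]
  gcongr
  rw [← ENNReal.ofReal_natCast]
  refine ENNReal.ofReal_le_ofReal ?_
  rw [Nat.card_Icc]
  have h1 := Nat.floor_le (show 0 ≤ c + L by linarith)
  have h2 := Nat.le_ceil (c - L)
  rcases le_total ⌈c - L⌉₊ (⌊c + L⌋₊ + 1) with h | h
  · rw [Nat.cast_sub h]; push_cast; linarith
  · rw [Nat.sub_eq_zero_of_le h]; push_cast; linarith

theorem sum_one_div_sq_le (n : ℕ) :
    ∑ k ∈ Finset.range n, 1 / (k : ℝ) ^ 2 ≤ 2 := by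
  have key : ∀ n : ℕ, ∑ k ∈ Finset.range (n + 2), 1 / (k : ℝ) ^ 2 ≤ 2 - 1 / ((n : ℝ) + 1) := by
    intro n
    induction n with
    | zero => norm_num [Finset.sum_range_succ]
    | succ n ih =>
      rw [Finset.sum_range_succ]
      have : 1 / ((n + 2 : ℕ) : ℝ) ^ 2 ≤ 1 / (n + 1) - 1 / ((n + 1 : ℕ) + 1) := by
        push_cast
        rw [div_sub_div _ _ (by positivity) (by positivity),
          div_le_div_iff₀ (by positivity) (by positivity)]
        nlinarith
      linarith
  calc _ ≤ ∑ k ∈ Finset.range (n + 2), 1 / (k : ℝ) ^ 2 :=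
        Finset.sum_le_sum_of_subset_of_nonneg (by simp) fun k _ _ => by positivity
    _ ≤ _ := key n
    _ ≤ 2 := by have : (0 : ℝ) ≤ 1 / (n + 1) := by positivity
                linarith

/-- If the ball around the fraction at distance `K/(q S)` meets the shell, then `S` is confined to
a short window around `K/(q ψ(q))`, and `ψ(S)` is much smaller than `ψ(q)`. -/
theorem ApproxData.hit_bounds {ψ w : ℕ → ℝ} (H : ApproxData ψ w) {N : ℕ} (T : Threshold ψ w N)
    {q S K : ℕ} (hq : N ≤ q) (hS : q < S) (hK : 1 ≤ K)
    (hit : |(K : ℝ) / (q * S) - ψ q| < 2 * ψ S + w q * ψ q) :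
    ψ S ≤ 16 * (((K * q : ℕ) : ℝ) ^ 2 * ψ (K * q)) * q ^ 2 * ψ q ^ 2 / K ^ 2 ∧
    |(S : ℝ) - K * (1 / (q * ψ q))| ≤ 2 * K * (1 / (q * ψ q)) *
      (2 * (16 * (((K * q : ℕ) : ℝ) ^ 2 * ψ (K * q)) * q ^ 2 * ψ q ^ 2 / K ^ 2) / ψ q + w q) := by
  have hq1 : 1 ≤ q := T.one_le.trans hq
  have hS1 : 1 ≤ S := hq1.trans hS.le
  have hu := H.pos q hq1
  have hv := H.pos S hS1
  have hw0 := H.wpos q hq1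
  have hw := T.wle q hq
  have hg := T.gle q hq
  have hvu := H.psi_anti hq1 hS.le
  have hgq := H.anti q S hq1 hS.le
  set u := ψ q
  set v := ψ S
  set ω := w q
  have hq' : (0 : ℝ) < q := by exact_mod_cast hq1
  have hS' : (0 : ℝ) < S := by exact_mod_cast hS1
  have hK' : (0 : ℝ) < K := by exact_mod_cast hK
  obtain ⟨hit1, hit2⟩ := abs_lt.1 hit
  have hwu : ω * u ≤ 1 / 4 * u := by gcongr
  have h4 : (K : ℝ) < 4 * (q * S * u) := by
    have : (K : ℝ) / (q * S) < 4 * u := by linarith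
    rw [div_lt_iff₀ (by positivity)] at this
    linarith
  have h25 : 25 * ((K : ℝ) * q) ≤ S := by
    calc 25 * ((K : ℝ) * q) ≤ 25 * (4 * (q * S * u) * q) := by gcongr
      _ = 100 * S * (q ^ 2 * u) := by ring
      _ ≤ 100 * S * (1 / 100) := by gcongr
      _ = S := by ring
  have hKq : K * q ≤ S := by
    have h0 : (0 : ℝ) ≤ (K : ℝ) * q := by positivity
    have : ((K * q : ℕ) : ℝ) ≤ S := by push_cast; linarith
    exact_mod_cast this
  have hKq1 : 1 ≤ K * q := Nat.mul_pos hK hq1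
  have hG := H.anti (K * q) S hKq1 hKq
  have hGp := H.pos (K * q) hKq1
  set G := ((K * q : ℕ) : ℝ) ^ 2 * ψ (K * q)
  have hG0 : 0 < G := by positivity
  have hP : v ≤ 16 * G * q ^ 2 * u ^ 2 / K ^ 2 := by
    rw [le_div_iff₀ (by positivity)]
    calc v * (K : ℝ) ^ 2 ≤ v * (4 * (q * S * u)) ^ 2 := by gcongr
      _ = 16 * (S ^ 2 * v) * q ^ 2 * u ^ 2 := by ring
      _ ≤ _ := by gcongr
  refine ⟨hP, ?_⟩
  set P := 16 * G * q ^ 2 * u ^ 2 / K ^ 2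
  have hv625 : 625 * v ≤ u := by
    have h1 : 25 * (q : ℝ) ≤ S := by
      have : (1 : ℝ) ≤ K := by exact_mod_cast hK
      nlinarith
    have h2 : (25 * (q : ℝ)) ^ 2 * v ≤ q ^ 2 * u := by
      refine le_trans ?_ hgq
      gcongr
    have h3 : (q : ℝ) ^ 2 * (625 * v) ≤ q ^ 2 * u := by linarith
    exact le_of_mul_le_mul_left h3 (by positivity)
  have hS2 : (S : ℝ) ≤ 2 * K * (1 / (q * u)) := by
    have h1 : u / 2 < (K : ℝ) / (q * S) := by linarith
    rw [lt_div_iff₀ (by positivity)] at h1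
    rw [mul_one_div, le_div_iff₀ (by positivity)]
    linarith
  have e : (S : ℝ) - K * (1 / (q * u)) = -(S / u * ((K : ℝ) / (q * S) - u)) := by
    field_simp
    ring
  rw [e, abs_neg, abs_mul, abs_of_pos (show 0 < (S : ℝ) / u by positivity)]
  calc (S : ℝ) / u * |(K : ℝ) / (q * S) - u| ≤ S / u * (2 * P + ω * u) := by
        gcongr; linarith
    _ = S * (2 * P / u + ω) := by field_simp
    _ ≤ _ := by gcongr

/-- The window of `ApproxData.hit_bounds` times the largest single overlap. In the product, `4 ψ(s)`
or `w(q) ψ(q)` is used as the bound of the overlap according to the part of the window. -/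
theorem ApproxData.tsum_overlap_le {ψ w : ℕ → ℝ} (H : ApproxData ψ w) {N : ℕ}
    (T : Threshold ψ w N) {q : ℕ} (hq : N ≤ q) {d : ℕ} (hd : 1 ≤ d) (k : ℕ) :
    ∑' s : ℕ, (d : ℝ≥0∞) * overlap ψ w q (d * s) (d * k) ≤
      ENNReal.ofReal (w q * ψ q / d *
        (64 / w q * (1 / (k : ℝ) ^ 2) + 384 * q * (((k * q : ℕ) : ℝ) ^ 2 * ψ (k * q) / k))) := by
  rcases Nat.eq_zero_or_pos k with rfl | hk
  · simp [overlap]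
  have hq1 : 1 ≤ q := T.one_le.trans hq
  have hkq1 : 1 ≤ k * q := Nat.mul_pos hk hq1
  have hu := H.pos q hq1
  have hw0 := H.wpos q hq1
  have hgk := T.gle (k * q) (hq.trans (Nat.le_mul_of_pos_left q hk))
  have hgq := T.gle q hq
  have hGp := H.pos (k * q) hkq1
  have hdk1 : 1 ≤ d * k := Nat.mul_pos hd hk
  have hGG : ((d * k * q : ℕ) : ℝ) ^ 2 * ψ (d * k * q) ≤ ((k * q : ℕ) : ℝ) ^ 2 * ψ (k * q) := by
    refine H.anti _ _ hkq1 ?_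
    rw [mul_assoc]
    exact Nat.le_mul_of_pos_left _ hd
  set u := ψ q
  set ω := w q
  set G := ((k * q : ℕ) : ℝ) ^ 2 * ψ (k * q)
  have hG0 : 0 < G := by positivity
  have hq' : (0 : ℝ) < q := by exact_mod_cast hq1
  have hd' : (0 : ℝ) < d := by exact_mod_cast hd
  have hk' : (0 : ℝ) < k := by exact_mod_cast hk
  set P := 16 * G * q ^ 2 * u ^ 2 / (d * k) ^ 2 with hPdef
  have hP0 : 0 < P := by positivity
  set X := 1 / (q * u) with hX
  have hX0 : 0 < X := by positivity
  set L := 2 * k * X * (2 * P / u + ω) with hL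
  have hL0 : 0 < L := by positivity
  have hkey : ∀ s : ℕ, overlap ψ w q (d * s) (d * k) ≠ 0 →
      ψ (d * s) ≤ P ∧ |(s : ℝ) - k * X| ≤ L := by
    intro s hs
    rw [overlap] at hs
    split_ifs at hs with hc
    · obtain ⟨h1, h2, h3⟩ := hc
      obtain ⟨hp, hwin⟩ := H.hit_bounds T hq h1 h2 h3
      push_cast at hp hwin hGG
      have hP' : 16 * (((d : ℝ) * k * q) ^ 2 * ψ (d * k * q)) * q ^ 2 * u ^ 2 / (d * k) ^ 2 ≤ P := by
        rw [hPdef]; gcongr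
      refine ⟨hp.trans hP', ?_⟩
      have : |(d : ℝ) * s - d * k * X| ≤ 2 * (d * k) * X * (2 * P / u + ω) := by
        refine hwin.trans ?_
        gcongr
      have e : (d : ℝ) * s - d * k * X = d * (s - k * X) := by ring
      rw [e, abs_mul, abs_of_pos hd'] at this
      refine le_of_mul_le_mul_left (this.trans (le_of_eq ?_)) hd'
      rw [hL]; ring
    · exact absurd rfl hs
  rw [ENNReal.tsum_mul_left]
  have hB : ∀ s : ℕ, overlap ψ w q (d * s) (d * k) ≤ ENNReal.ofReal (min (ω * u) (4 * P)) := by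
    intro s
    by_cases h : overlap ψ w q (d * s) (d * k) = 0
    · rw [h]; exact zero_le
    · have := (hkey s h).1
      rw [overlap]
      split_ifs
      · refine ENNReal.ofReal_le_ofReal ?_
        gcongr
      · exact zero_le
  refine (mul_le_mul_right (tsum_window_le _ (k * X) L (by positivity) hL0.le _
    (fun s hs => (hkey s hs).2) hB) _).trans ?_
  rw [← ENNReal.ofReal_natCast d, ← ENNReal.ofReal_mul (by positivity),
    ← ENNReal.ofReal_mul (by positivity)]
  refine ENNReal.ofReal_le_ofReal ?_
  have hm1 : min (ω * u) (4 * P) ≤ ω * u := min_le_left _ _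
  have hm2 : min (ω * u) (4 * P) ≤ 4 * P := min_le_right _ _
  have hmain : (2 * L + 1) * min (ω * u) (4 * P) ≤ 4 * P + 24 * k * X * P * ω := by
    calc (2 * L + 1) * min (ω * u) (4 * P)
        = min (ω * u) (4 * P) + 8 * k * X * P / u * min (ω * u) (4 * P)
          + 4 * k * X * ω * min (ω * u) (4 * P) := by rw [hL]; ring
      _ ≤ 4 * P + 8 * k * X * P / u * (ω * u) + 4 * k * X * ω * (4 * P) := by gcongr
      _ = _ := by field_simp; ring
  calc (d : ℝ) * ((2 * L + 1) * min (ω * u) (4 * P)) ≤ d * (4 * P + 24 * k * X * P * ω) := by gcongr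
    _ = ω * u / d * (64 * (G * (q ^ 2 * u)) / ω * (1 / (k : ℝ) ^ 2) + 384 * q * (G / k)) := by
        rw [hPdef, hX]; field_simp; ring
    _ ≤ _ := by
        have : G * (q ^ 2 * u) ≤ 1 := by
          have : 0 ≤ (q : ℝ) ^ 2 * u := by positivity
          nlinarith
        have h64 : 64 * (G * (q ^ 2 * u)) ≤ 64 := by linarith
        gcongr

/-- The total overlap of the shells of denominator `q` with their obstacles, relative to the length
`w(q) ψ(q)` of one shell. -/
theorem ApproxData.sum_volume_le {ψ w : ℕ → ℝ} (H : ApproxData ψ w) {N : ℕ}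
    (T : Threshold ψ w N) {q : ℕ} (hq : N ≤ q) :
    ∑ p ∈ Finset.range q, volume (shell ψ w p q ∩ obstacle ψ p q) ≤
      ENNReal.ofReal (w q * ψ q * (128 / w q + 384 * q * hsum ψ q) *
        ∑ d ∈ q.divisors, 1 / (d : ℝ)) := by
  have hq1 : 1 ≤ q := T.one_le.trans hq
  have hu := H.pos q hq1
  have hw0 := H.wpos q hq1
  have hh := H.hsum_nonneg q
  refine (sum_volume_le_sum_divisors ψ w q hq1 (by positivity)).trans ?_
  rw [Finset.mul_sum, ENNReal.ofReal_sum_of_nonneg (fun d _ => by positivity)]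
  refine Finset.sum_le_sum fun d hd => ?_
  have hd0 : 0 < d := Nat.pos_of_mem_divisors hd
  refine (ENNReal.tsum_le_tsum fun k => H.tsum_overlap_le T hq hd0 k).trans ?_
  refine ENNReal.tsum_le_of_sum_range_le fun n => ?_
  have hterm : ∀ k : ℕ, 0 ≤ ((k * q : ℕ) : ℝ) ^ 2 * ψ (k * q) / k := by
    intro k
    have := H.term_nonneg (k * q)
    have e : ((k * q : ℕ) : ℝ) ^ 2 * ψ (k * q) = ((k * q : ℕ) : ℝ) * (((k * q : ℕ) : ℝ) * ψ (k * q)) := by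
      ring
    rw [e]; positivity
  rw [← ENNReal.ofReal_sum_of_nonneg (fun k _ => by have := hterm k; positivity)]
  refine ENNReal.ofReal_le_ofReal ?_
  rw [← Finset.mul_sum, Finset.sum_add_distrib, ← Finset.mul_sum, ← Finset.mul_sum]
  have h1 := sum_one_div_sq_le n
  have h2 := H.sum_g_mul_le q hq1 n
  calc _ ≤ w q * ψ q / d * (64 / w q * 2 + 384 * q * hsum ψ q) := by gcongr
    _ = _ := by ring

/-! ### Obstructed shells are rare -/

theorem sum_sum_divisors_le (Q : ℕ) :
    ∑ q ∈ Finset.Ioc 0 Q, ∑ d ∈ q.divisors, 1 / (d : ℝ) ≤ 2 * Q := by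
  have h1 : ∀ q ∈ Finset.Ioc 0 Q, ∑ d ∈ q.divisors, 1 / (d : ℝ) =
      ∑ d ∈ Finset.Ioc 0 Q, if d ∣ q then 1 / (d : ℝ) else 0 := by
    intro q hq
    rw [Finset.mem_Ioc] at hq
    rw [← Finset.sum_filter]
    refine Finset.sum_congr ?_ fun _ _ => rfl
    ext d
    simp only [Nat.mem_divisors, Finset.mem_filter, Finset.mem_Ioc]
    constructor
    · rintro ⟨h, h'⟩
      exact ⟨⟨Nat.pos_of_dvd_of_pos h hq.1, (Nat.le_of_dvd hq.1 h).trans hq.2⟩, h⟩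
    · rintro ⟨_, h⟩
      exact ⟨h, hq.1.ne'⟩
  rw [Finset.sum_congr rfl h1, Finset.sum_comm]
  calc _ ≤ ∑ d ∈ Finset.Ioc 0 Q, (Q : ℝ) * (1 / (d : ℝ) ^ 2) := by
        refine Finset.sum_le_sum fun d hd => ?_
        rw [Finset.mem_Ioc] at hd
        rw [← Finset.sum_filter, Finset.sum_const, Nat.Ioc_filter_dvd_card_eq_div, nsmul_eq_mul]
        have hd' : (0 : ℝ) < d := by exact_mod_cast hd.1
        have : ((Q / d : ℕ) : ℝ) ≤ Q / d := Nat.cast_div_le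
        calc ((Q / d : ℕ) : ℝ) * (1 / d) ≤ Q / d * (1 / d) := by gcongr
          _ = _ := by field_simp
    _ = (Q : ℝ) * ∑ d ∈ Finset.Ioc 0 Q, 1 / (d : ℝ) ^ 2 := by rw [Finset.mul_sum]
    _ ≤ (Q : ℝ) * 2 := by
        gcongr
        refine le_trans ?_ (sum_one_div_sq_le (Q + 1))
        refine Finset.sum_le_sum_of_subset_of_nonneg ?_ fun k _ _ => by positivity
        intro d hd
        rw [Finset.mem_Ioc] at hd
        exact Finset.mem_range.2 (by omega)
    _ = _ := mul_comm _ _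

open Classical in
/-- Numerators `p < q` for which more than half of the shell of `p/q` lies in the obstacle set. -/
noncomputable def badNumerators (ψ w : ℕ → ℝ) (q : ℕ) : Finset ℕ :=
  (Finset.range q).filter fun p =>
    ENNReal.ofReal (w q * ψ q / 2) < volume (shell ψ w p q ∩ obstacle ψ p q)

theorem ApproxData.card_badNumerators_le {ψ w : ℕ → ℝ} (H : ApproxData ψ w) {N : ℕ}
    (T : Threshold ψ w N) {q : ℕ} (hq : N ≤ q) :
    ((badNumerators ψ w q).card : ℝ) ≤
      2 * (128 / w q + 384 * q * hsum ψ q) * ∑ d ∈ q.divisors, 1 / (d : ℝ) := by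
  have hq1 : 1 ≤ q := T.one_le.trans hq
  have hu := H.pos q hq1
  have hw0 := H.wpos q hq1
  have hh := H.hsum_nonneg q
  have h1 : ENNReal.ofReal ((badNumerators ψ w q).card * (w q * ψ q / 2)) ≤
      ENNReal.ofReal (w q * ψ q * (128 / w q + 384 * q * hsum ψ q) *
        ∑ d ∈ q.divisors, 1 / (d : ℝ)) := by
    refine le_trans ?_ (H.sum_volume_le T hq)
    rw [ENNReal.ofReal_mul (by positivity), ENNReal.ofReal_natCast, ← nsmul_eq_mul]
    refine le_trans (Finset.card_nsmul_le_sum _ _ _ fun p hp => ?_)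
      (Finset.sum_le_sum_of_subset (Finset.filter_subset _ _))
    exact ((Finset.mem_filter.1 hp).2).le
  have hσ : (0 : ℝ) ≤ ∑ d ∈ q.divisors, 1 / (d : ℝ) := Finset.sum_nonneg fun d _ => by positivity
  rw [ENNReal.ofReal_le_ofReal_iff (by positivity)] at h1
  have h2 : (w q * ψ q / 2) * (badNumerators ψ w q).card ≤ (w q * ψ q / 2) *
      (2 * (128 / w q + 384 * q * hsum ψ q) * ∑ d ∈ q.divisors, 1 / (d : ℝ)) := by linarith
  exact le_of_mul_le_mul_left h2 (by positivity)

/-- Shells of denominator between `Q/100` and `Q` that are mostly obstructed are a negligible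
proportion of the `≍ Q²` shells. -/
theorem ApproxData.sum_card_badNumerators_le {ψ w : ℕ → ℝ} (H : ApproxData ψ w) {N : ℕ}
    (T : Threshold ψ w N) {κ : ℝ} (hκ : 0 < κ) :
    ∀ᶠ Q : ℕ in atTop,
      ((∑ q ∈ (Finset.Ioc 0 Q).filter (fun q => Q ≤ 100 * q), (badNumerators ψ w q).card : ℕ) : ℝ) ≤
        κ * (Q : ℝ) ^ 2 := by
  have hΓ : ∀ᶠ q : ℕ in atTop, 2 * (128 / w q + 384 * q * hsum ψ q) ≤ κ / 2 * q := by
    have h1 : ∀ᶠ q : ℕ in atTop, hsum ψ q < κ / 4 / 768 :=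
      (H.hsum_tendsto).eventually_lt_const (by positivity)
    have h2 : Tendsto (fun q : ℕ => (q : ℝ) ^ (-(1 / 2 : ℝ))) atTop (𝓝 0) :=
      (tendsto_rpow_neg_atTop (by norm_num)).comp tendsto_natCast_atTop_atTop
    have h3 : ∀ᶠ q : ℕ in atTop, (q : ℝ) ^ (-(1 / 2 : ℝ)) < κ / 4 / 256 :=
      h2.eventually_lt_const (by positivity)
    filter_upwards [h1, h3, H.wslow (1 / 2) (by norm_num), eventually_ge_atTop 1] with q h1 h3 h4 h5
    have hq : (0 : ℝ) < q := by exact_mod_cast h5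
    have h6 : 1 / w q ≤ (q : ℝ) ^ (1 / 2 : ℝ) := by
      rw [div_le_iff₀ (H.wpos q h5)]
      calc (1 : ℝ) = (q : ℝ) ^ (1 / 2 : ℝ) * (q : ℝ) ^ (-(1 / 2 : ℝ)) := by
            rw [← Real.rpow_add hq]; norm_num
        _ ≤ _ := by gcongr
    have h7 : (q : ℝ) ^ (1 / 2 : ℝ) = q * (q : ℝ) ^ (-(1 / 2 : ℝ)) := by
      nth_rewrite 2 [← Real.rpow_one (q : ℝ)]
      rw [← Real.rpow_add hq]; norm_num
    have h8 : 1 / w q ≤ q * (κ / 4 / 256) := by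
      rw [h7] at h6
      exact h6.trans (by gcongr)
    have h9 : (q : ℝ) * hsum ψ q ≤ q * (κ / 4 / 768) := by gcongr
    have e : 128 / w q = 128 * (1 / w q) := by ring
    rw [e]
    linarith
  obtain ⟨q₀, hq₀⟩ := eventually_atTop.1 hΓ
  filter_upwards [eventually_ge_atTop (100 * max N q₀)] with Q hQ
  push_cast
  calc _ ≤ ∑ q ∈ (Finset.Ioc 0 Q).filter (fun q => Q ≤ 100 * q),
        κ / 2 * Q * ∑ d ∈ q.divisors, 1 / (d : ℝ) := by
        refine Finset.sum_le_sum fun q hq => ?_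
        simp only [Finset.mem_filter, Finset.mem_Ioc] at hq
        have hqm : max N q₀ ≤ q := by omega
        refine (H.card_badNumerators_le T ((le_max_left _ _).trans hqm)).trans ?_
        have hσ : (0 : ℝ) ≤ ∑ d ∈ q.divisors, 1 / (d : ℝ) :=
          Finset.sum_nonneg fun d _ => by positivity
        have h1 := hq₀ q ((le_max_right _ _).trans hqm)
        have h2 : (q : ℝ) ≤ Q := by exact_mod_cast hq.1.2
        refine mul_le_mul_of_nonneg_right (h1.trans ?_) hσ
        gcongr
    _ ≤ ∑ q ∈ Finset.Ioc 0 Q, κ / 2 * Q * ∑ d ∈ q.divisors, 1 / (d : ℝ) := by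
        refine Finset.sum_le_sum_of_subset_of_nonneg (Finset.filter_subset _ _) fun q _ _ => ?_
        have hσ : (0 : ℝ) ≤ ∑ d ∈ q.divisors, 1 / (d : ℝ) :=
          Finset.sum_nonneg fun d _ => by positivity
        positivity
    _ = κ / 2 * Q * ∑ q ∈ Finset.Ioc 0 Q, ∑ d ∈ q.divisors, 1 / (d : ℝ) := by rw [Finset.mul_sum]
    _ ≤ κ / 2 * Q * (2 * Q) := by
        have := sum_sum_divisors_le Q
        gcongr
    _ = _ := by ring

/-! ### Nodes of the Cantor construction -/

/-- Points within distance `2 ψ(s)` of a fraction of denominator `s`, for some `s > n`. -/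
def tailNbhd (ψ : ℕ → ℝ) (n : ℕ) : Set ℝ :=
  {y | ∃ s : ℕ, n < s ∧ ∃ r : ℤ, |y - (r : ℝ) / s| < 2 * ψ s}

/-- Nodes of the Cantor construction: `[a, b] ⊆ [0, 1]` already avoids, for denominators in
`(N, n]`, the intervals forbidden in the definition of `E(Ψ, ω)`, and at least half of it avoids the
neighbourhoods attached to all later denominators. -/
structure GoodNode (ψ w : ℕ → ℝ) (N : ℕ) (a b : ℝ) (n : ℕ) : Prop where
  le : N ≤ n
  nonneg : 0 ≤ a
  lt : a < b
  le_one : b ≤ 1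
  far : ∀ s : ℕ, N < s → s ≤ n → ∀ r : ℤ, ∀ y ∈ Icc a b, (1 - w s) * ψ s ≤ |y - (r : ℝ) / s|
  room : ENNReal.ofReal ((b - a) / 2) ≤ volume (Icc a b \ tailNbhd ψ n)

theorem volume_near_fractions_le {a b : ℝ} (hab : a ≤ b) {q : ℕ} (hq : 0 < q) {ρ : ℝ}
    (hρ0 : 0 ≤ ρ) (hρ : ρ ≤ 1 / q) :
    volume (Icc a b ∩ {y | ∃ p : ℤ, |y - (p : ℝ) / q| ≤ ρ}) ≤
      ENNReal.ofReal (((b - a) * q + 3) * (2 * ρ)) := by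
  have hq' : (0 : ℝ) < q := by exact_mod_cast hq
  have hsub : Icc a b ∩ {y | ∃ p : ℤ, |y - (p : ℝ) / q| ≤ ρ} ⊆
      ⋃ p ∈ Finset.Icc ⌈q * a - 1⌉ ⌊q * b + 1⌋, Metric.closedBall ((p : ℝ) / q) ρ := by
    rintro y ⟨⟨hy1, hy2⟩, p, hp⟩
    simp only [mem_iUnion]
    refine ⟨p, ?_, by simpa [Real.dist_eq] using hp⟩
    have h := abs_le.1 (hp.trans hρ)
    have e1 : (q : ℝ) * ((p : ℝ) / q) = p := by field_simp
    have e2 : (q : ℝ) * (1 / q) = 1 := by field_simp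
    have h1 : (q : ℝ) * (y - p / q) ≤ q * (1 / q) := by gcongr; exact h.2
    have h2 : (q : ℝ) * (-(1 / q)) ≤ q * (y - p / q) := by gcongr; exact h.1
    have h3 : (q : ℝ) * a ≤ q * y := by gcongr
    have h4 : (q : ℝ) * y ≤ q * b := by gcongr
    rw [mul_sub, e1] at h1 h2
    rw [mul_neg] at h2
    rw [e2] at h1 h2
    exact Finset.mem_Icc.2 ⟨Int.ceil_le.2 (by linarith), Int.le_floor.2 (by linarith)⟩
  refine (measure_mono hsub).trans ((measure_biUnion_finset_le _ _).trans ?_)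
  simp only [Real.volume_closedBall, Finset.sum_const, nsmul_eq_mul]
  rw [← ENNReal.ofReal_natCast, ← ENNReal.ofReal_mul (by positivity)]
  refine ENNReal.ofReal_le_ofReal ?_
  gcongr
  have h0 : 0 ≤ (b - a) * q := mul_nonneg (sub_nonneg.2 hab) hq'.le
  rw [Int.card_Icc]
  have h1 := Int.floor_le ((q : ℝ) * b + 1)
  have h2 := Int.le_ceil ((q : ℝ) * a - 1)
  rcases le_total 0 (⌊(q : ℝ) * b + 1⌋ + 1 - ⌈(q : ℝ) * a - 1⌉) with h | h
  · have : ((⌊(q : ℝ) * b + 1⌋ + 1 - ⌈(q : ℝ) * a - 1⌉).toNat : ℝ) =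
        ((⌊(q : ℝ) * b + 1⌋ + 1 - ⌈(q : ℝ) * a - 1⌉ : ℤ) : ℝ) := by
      exact_mod_cast Int.toNat_of_nonneg h
    rw [this]; push_cast; linarith
  · rw [Int.toNat_of_nonpos h]; push_cast; linarith

theorem ApproxData.goodNode_root {ψ w : ℕ → ℝ} (H : ApproxData ψ w) {N : ℕ} (T : Threshold ψ w N)
    (htail : ∑' s : ℕ, ((s + (N + 1) : ℕ) : ℝ) * ψ (s + (N + 1)) ≤ 1 / 32) :
    GoodNode ψ w N 0 1 N := by
  refine ⟨le_rfl, le_rfl, zero_lt_one, le_rfl, fun s h1 h2 => absurd h1 (not_lt.2 h2), ?_⟩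
  have hU : volume (Icc (0 : ℝ) 1 ∩ tailNbhd ψ N) ≤ ENNReal.ofReal (1 / 2) := by
    have hsub : Icc (0 : ℝ) 1 ∩ tailNbhd ψ N ⊆ ⋃ t : ℕ, (Icc (0 : ℝ) 1 ∩
        {y | ∃ r : ℤ, |y - (r : ℝ) / (t + (N + 1) : ℕ)| ≤ 2 * ψ (t + (N + 1))}) := by
      rintro y ⟨hy, s, hs, r, hr⟩
      obtain ⟨t, rfl⟩ := Nat.exists_eq_add_of_lt hs
      rw [mem_iUnion]
      have e : N + t + 1 = t + (N + 1) := by ring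
      rw [e] at hr
      exact ⟨t, hy, r, hr.le⟩
    refine (measure_mono hsub).trans ((measure_iUnion_le _).trans ?_)
    have hsummable : Summable fun s : ℕ => ((s + (N + 1) : ℕ) : ℝ) * ψ (s + (N + 1)) :=
      (summable_nat_add_iff (N + 1)).2 H.summ
    calc _ ≤ ∑' t : ℕ, ENNReal.ofReal (16 * (((t + (N + 1) : ℕ) : ℝ) * ψ (t + (N + 1)))) := by
          refine ENNReal.tsum_le_tsum fun t => ?_
          set s := t + (N + 1) with hs
          have hs1 : 1 ≤ s := by omega
          have hs' : (1 : ℝ) ≤ s := by exact_mod_cast hs1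
          have hp := H.pos s hs1
          have hg := T.gle s (by omega)
          refine (volume_near_fractions_le zero_le_one hs1 (by positivity) ?_).trans
            (ENNReal.ofReal_le_ofReal ?_)
          · rw [le_div_iff₀ (by positivity)]
            nlinarith
          · nlinarith
      _ = ENNReal.ofReal (∑' t : ℕ, 16 * (((t + (N + 1) : ℕ) : ℝ) * ψ (t + (N + 1)))) := by
          rw [ENNReal.ofReal_tsum_of_nonneg (fun t => ?_) (hsummable.mul_left 16)]
          have := H.term_nonneg (t + (N + 1))
          positivity
      _ ≤ _ := by
          refine ENNReal.ofReal_le_ofReal ?_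
          rw [tsum_mul_left]; linarith
  have h1 := measure_le_inter_add_sdiff volume (Icc (0 : ℝ) 1) (tailNbhd ψ N)
  rw [Real.volume_Icc] at h1
  have h2 : ENNReal.ofReal (1 / 2) + ENNReal.ofReal (1 / 2) = ENNReal.ofReal (1 - 0) := by
    rw [← ENNReal.ofReal_add (by norm_num) (by norm_num)]; norm_num
  rw [← h2] at h1
  have h3 := h1.trans (add_le_add_left hU _)
  have h4 := (ENNReal.add_le_add_iff_left ENNReal.ofReal_ne_top).1 h3
  simpa using h4

/-- Points within `1/(q Q)` of a fraction of denominator `q < Q/100`; their Dirichlet approximants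
of order `Q` may have too small a denominator. -/
def smallDenNbhd (Q : ℕ) : Set ℝ :=
  {y | ∃ q : ℕ, 0 < q ∧ 100 * q < Q ∧ ∃ p : ℤ, |y - (p : ℝ) / q| ≤ 1 / (q * Q)}

/-- The estimate reduces to `(1/Q) ∑_{q < Q} 1/q → 0`, a Cesàro mean of a null sequence. -/
theorem volume_smallDenNbhd_le {a b : ℝ} (hab : a < b) :
    ∀ᶠ Q : ℕ in atTop, volume (Icc a b ∩ smallDenNbhd Q) ≤ ENNReal.ofReal ((b - a) / 16) := by
  have hces : Tendsto (fun n : ℕ => (n : ℝ)⁻¹ * ∑ i ∈ Finset.range n, 1 / (i : ℝ)) atTop (𝓝 0) :=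
    tendsto_one_div_atTop_nhds_zero_nat.cesaro
  have hev := hces.eventually_lt_const (show (0 : ℝ) < (b - a) / 240 by linarith)
  filter_upwards [hev, eventually_ge_atTop 1] with Q hQ hQ1
  have hQ0 : (0 : ℝ) < Q := by exact_mod_cast hQ1
  set R := (Finset.range Q).filter (fun q => 0 < q ∧ 100 * q < Q) with hR
  have hsub : Icc a b ∩ smallDenNbhd Q ⊆ ⋃ q ∈ R,
      (Icc a b ∩ {y | ∃ p : ℤ, |y - (p : ℝ) / q| ≤ 1 / (q * Q)}) := by
    rintro y ⟨hy, q, hq, hqQ, p, hp⟩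
    simp only [mem_iUnion]
    exact ⟨q, by simp only [hR, Finset.mem_filter, Finset.mem_range]; omega, hy, p, hp⟩
  refine (measure_mono hsub).trans ((measure_biUnion_finset_le _ _).trans ?_)
  have hterm : ∀ q ∈ R, volume (Icc a b ∩ {y | ∃ p : ℤ, |y - (p : ℝ) / q| ≤ 1 / (q * Q)}) ≤
      ENNReal.ofReal (2 * (b - a) / Q + 6 * ((Q : ℝ)⁻¹ * (1 / q))) := by
    intro q hq
    simp only [hR, Finset.mem_filter, Finset.mem_range] at hq
    have hq0 : (0 : ℝ) < q := by exact_mod_cast hq.2.1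
    refine (volume_near_fractions_le hab.le hq.2.1 (by positivity) ?_).trans
      (ENNReal.ofReal_le_ofReal (le_of_eq ?_))
    · have : (1 : ℝ) ≤ Q := by exact_mod_cast hQ1
      gcongr
      nlinarith
    · field_simp; ring
  refine (Finset.sum_le_sum hterm).trans ?_
  have hba : 0 < b - a := sub_pos.2 hab
  rw [← ENNReal.ofReal_sum_of_nonneg fun q _ => by positivity]
  refine ENNReal.ofReal_le_ofReal ?_
  rw [Finset.sum_add_distrib, Finset.sum_const, nsmul_eq_mul, ← Finset.mul_sum, ← Finset.mul_sum]
  have hcard : (R.card : ℝ) ≤ Q / 100 := by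
    have h1 : R ⊆ Finset.Ioc 0 (Q / 100) := by
      intro q hq
      simp only [hR, Finset.mem_filter, Finset.mem_range] at hq
      rw [Finset.mem_Ioc]; omega
    have h2 := Finset.card_le_card h1
    rw [Nat.card_Ioc, Nat.sub_zero] at h2
    calc (R.card : ℝ) ≤ ((Q / 100 : ℕ) : ℝ) := by exact_mod_cast h2
      _ ≤ (Q : ℝ) / (100 : ℕ) := Nat.cast_div_le
      _ = _ := by norm_num
  have h1 : (R.card : ℝ) * (2 * (b - a) / Q) ≤ (b - a) / 50 := by
    calc (R.card : ℝ) * (2 * (b - a) / Q) ≤ Q / 100 * (2 * (b - a) / Q) := by gcongr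
      _ = _ := by field_simp; ring
  have h2 : (Q : ℝ)⁻¹ * ∑ q ∈ R, 1 / (q : ℝ) ≤ (Q : ℝ)⁻¹ * ∑ i ∈ Finset.range Q, 1 / (i : ℝ) := by
    gcongr
    exact Finset.filter_subset _ _
  linarith

theorem abs_div_sub_div_ge {p q s r : ℤ} (hq : 0 < q) (hs : 0 < s) (hne : p * s - r * q ≠ 0) :
    1 / ((q : ℝ) * s) ≤ |(p : ℝ) / q - (r : ℝ) / s| := by
  have hq' : (0 : ℝ) < q := by exact_mod_cast hq
  have hs' : (0 : ℝ) < s := by exact_mod_cast hs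
  have h1 : (1 : ℝ) ≤ |(p : ℝ) * s - r * q| := by
    have := Int.one_le_abs hne
    exact_mod_cast this
  have e : (p : ℝ) / q - (r : ℝ) / s = ((p : ℝ) * s - r * q) / (q * s) := by
    field_simp
  rw [e, abs_div, abs_of_pos (show (0 : ℝ) < q * s by positivity)]
  gcongr

/-- Only fractions `r/s` to the right of `p/q` can interfere with the right half-shell of `p/q`: those
on the left are too far from `p/q`, and `r/s = p/q` forces `s ≥ 2q`, whence `4 ψ(s) ≤ ψ(q)`. -/
theorem ApproxData.shell_inter_tailNbhd_subset {ψ w : ℕ → ℝ} (H : ApproxData ψ w) {N : ℕ}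
    (T : Threshold ψ w N) {p q : ℕ} (hq : N ≤ q) (hpq : Nat.Coprime p q) :
    shell ψ w p q ∩ tailNbhd ψ q ⊆ obstacle ψ p q := by
  rintro y ⟨⟨hy1, hy2⟩, s, hs, r, hr⟩
  have hq1 : 1 ≤ q := T.one_le.trans hq
  have hs1 : 1 ≤ s := hq1.trans hs.le
  have hu := H.pos q hq1
  have hv := H.pos s hs1
  have hw0 := H.wpos q hq1
  have hw := T.wle q hq
  have hgs := T.gle s (hq.trans hs.le)
  have hgq := H.anti q s hq1 hs.le
  have hq' : (0 : ℝ) < q := by exact_mod_cast hq1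
  have hs' : (0 : ℝ) < s := by exact_mod_cast hs1
  have hqs : (q : ℝ) < s := by exact_mod_cast hs
  have hshell : 3 / 4 * ψ q ≤ y - p / q := by nlinarith
  rcases lt_trichotomy (r * q - p * s : ℤ) 0 with hk | hk | hk
  · exfalso
    have h1 : ((r * q - p * s : ℤ) : ℝ) ≤ -1 := by exact_mod_cast (by omega : (r * q - p * s : ℤ) ≤ -1)
    push_cast at h1
    have e : (p : ℝ) / q - r / s = (p * s - r * q) / (q * s) := by field_simp
    have h2 : 1 / ((q : ℝ) * s) ≤ p / q - r / s := by
      rw [e]; gcongr; linarith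
    have h3 : 2 * ψ s ≤ 1 / ((q : ℝ) * s) := by
      rw [le_div_iff₀ (by positivity)]
      have : (q : ℝ) * s * ψ s ≤ s ^ 2 * ψ s := by
        rw [pow_two]; gcongr
      linarith
    have := (abs_lt.1 hr).2
    linarith
  · exfalso
    have hdvd : q ∣ s := by
      have h1 : (q : ℤ) ∣ p * s := ⟨r, by linarith⟩
      have h2 : q ∣ p * s := by exact_mod_cast h1
      exact hpq.symm.dvd_of_dvd_mul_left h2
    have h2q : 2 * q ≤ s := by
      obtain ⟨t, rfl⟩ := hdvd
      have : 2 ≤ t := by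
        by_contra h
        have : t ≤ 1 := by omega
        nlinarith
      nlinarith
    have h2q' : 2 * (q : ℝ) ≤ s := by exact_mod_cast h2q
    have heq : (r : ℝ) / s = p / q := by
      have : (r : ℝ) * q - p * s = 0 := by exact_mod_cast hk
      rw [div_eq_div_iff hs'.ne' hq'.ne']; linarith
    rw [heq] at hr
    have h4 : 4 * ψ s ≤ ψ q := by
      have h5 : (2 * (q : ℝ)) ^ 2 * ψ s ≤ q ^ 2 * ψ q := by
        refine le_trans ?_ hgq
        gcongr
      have h6 : (q : ℝ) ^ 2 * (4 * ψ s) ≤ q ^ 2 * ψ q := by linarith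
      exact le_of_mul_le_mul_left h6 (by positivity)
    have := (abs_lt.1 hr).2
    linarith
  · obtain ⟨k, hk'⟩ := Int.eq_ofNat_of_zero_le hk.le
    refine ⟨s, k, hs, ?_, ?_, ?_⟩
    · have : (0 : ℤ) < k := by rw [← hk']; exact hk
      exact_mod_cast this
    · have : (q : ℤ) ∣ p * s + k := ⟨r, by rw [← hk']; ring⟩
      exact_mod_cast this
    · have e : (p : ℝ) / q + (k : ℝ) / (q * s) = r / s := by
        have : (k : ℝ) = r * q - p * s := by
          have h : ((k : ℤ) : ℝ) = ((r * q - p * s : ℤ) : ℝ) := by rw [hk']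
          push_cast at h; exact h
        rw [this]; field_simp; ring
      rw [e]; exact hr

/-- The shell of a Dirichlet approximant `p/q` of a point `x` of the parent avoiding `tailNbhd` is a
good node, provided `p` is not a bad numerator. -/
theorem ApproxData.goodNode_child {ψ w : ℕ → ℝ} (H : ApproxData ψ w) {N : ℕ}
    (T : Threshold ψ w N) {a b : ℝ} {n : ℕ} (hnode : GoodNode ψ w N a b n) {p q : ℕ}
    (hq : N < q) (hpq : Nat.Coprime p q) (hp : p < q) (hgood : p ∉ badNumerators ψ w q)
    (ha : a ≤ (p : ℝ) / q) (hb : (p : ℝ) / q + ψ q ≤ b) {x : ℝ}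
    (hx : x ∉ tailNbhd ψ n) (hxp : |x - (p : ℝ) / q| ≤ 1 / (q : ℝ) ^ 2) :
    GoodNode ψ w N ((p : ℝ) / q + (1 - w q) * ψ q) ((p : ℝ) / q + ψ q) q := by
  have hq1 : 1 ≤ q := T.one_le.trans hq.le
  have hu := H.pos q hq1
  have hw0 := H.wpos q hq1
  have hw := T.wle q hq.le
  have hgq := T.gle q hq.le
  have hq' : (0 : ℝ) < q := by exact_mod_cast hq1
  have h34 : 3 / 4 * ψ q ≤ (1 - w q) * ψ q := by gcongr; linarith
  have hwu : 0 < w q * ψ q := by positivity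
  refine ⟨hq.le, add_nonneg (by positivity) (by linarith), by nlinarith, hb.trans hnode.le_one, ?_, ?_⟩
  · intro s hNs hsq r y hy
    have hs1 : 1 ≤ s := by omega
    have hs' : (0 : ℝ) < s := by exact_mod_cast hs1
    have hv := H.pos s hs1
    have hws := H.wpos s hs1
    have hgs := T.gle s hNs.le
    have hle : (1 - w s) * ψ s ≤ ψ s := by nlinarith
    have hyp1 : (1 - w q) * ψ q ≤ y - p / q := by linarith [hy.1]
    have hyp2 : y - p / q ≤ ψ q := by linarith [hy.2]
    rcases le_or_gt s n with hsn | hsn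
    · exact hnode.far s hNs hsn r y ⟨by linarith, by linarith [hy.2]⟩
    rcases hsq.lt_or_eq with hlt | rfl
    · have hxs : 2 * ψ s ≤ |x - (r : ℝ) / s| := by
        by_contra! hcon
        exact hx ⟨s, hsn, r, hcon⟩
      have hvu := H.psi_anti hs1 hsq
      have hyp : |y - p / q| ≤ ψ q := by rw [abs_le]; constructor <;> linarith
      -- if `ψ(s)` is large, the shell is close to `x`, which is `2 ψ(s)`-far from `r/s`; otherwise
      -- `p/q` and `r/s` are far apart since both have small denominators
      rcases le_or_gt (ψ q + 1 / (q : ℝ) ^ 2) (ψ s) with hcase | hcase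
      · have h1 : |x - (r : ℝ) / s| ≤ |x - p / q| + |y - p / q| + |y - r / s| := by
          have e : x - (r : ℝ) / s = (x - p / q) - (y - p / q) + (y - r / s) := by ring
          rw [e]
          exact (abs_add_le _ _).trans (by gcongr; exact abs_sub _ _)
        linarith
      · have hne : ((p : ℤ) * s - r * q) ≠ 0 := by
          intro h0
          have h1 : (q : ℤ) ∣ p * s := ⟨r, by linarith⟩
          have h2 : q ∣ p * s := by exact_mod_cast h1
          exact absurd (Nat.le_of_dvd hs1 (hpq.symm.dvd_of_dvd_mul_left h2)) (not_le.2 hlt)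
        have h1 := abs_div_sub_div_ge (by exact_mod_cast hq1 : (0 : ℤ) < q)
          (by exact_mod_cast hs1 : (0 : ℤ) < s) hne
        simp only [Int.cast_natCast] at h1
        -- `(q s ψ(s))² = (q² ψ(s)) (s² ψ(s)) ≤ 2 / 100`
        have h2 : (q : ℝ) ^ 2 * ψ s ≤ 2 := by
          have : (q : ℝ) ^ 2 * ψ s ≤ q ^ 2 * (ψ q + 1 / (q : ℝ) ^ 2) := by gcongr
          have e : (q : ℝ) ^ 2 * (ψ q + 1 / (q : ℝ) ^ 2) = q ^ 2 * ψ q + 1 := by field_simp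
          linarith
        have h3 : (q : ℝ) * s * ψ s ≤ 1 / 2 := by
          refine abs_le_of_sq_le_sq' ?_ (by norm_num) |>.2
          calc ((q : ℝ) * s * ψ s) ^ 2 = (q ^ 2 * ψ s) * (s ^ 2 * ψ s) := by ring
            _ ≤ 2 * (1 / 100) := by gcongr
            _ ≤ _ := by norm_num
        have h4 : 2 * ψ s ≤ 1 / ((q : ℝ) * s) := by
          rw [le_div_iff₀ (by positivity)]; linarith
        have h5 : |(p : ℝ) / q - r / s| ≤ |y - p / q| + |y - r / s| := by
          have e : (p : ℝ) / q - r / s = (y - r / s) - (y - p / q) := by ring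
          rw [e, add_comm]
          exact abs_sub _ _
        linarith
    · by_cases hrp : (p : ℤ) - r = 0
      · have : (r : ℝ) = p := by
          have : r = p := by omega
          exact_mod_cast this
        rw [this]
        exact hyp1.trans (le_abs_self _)
      · have h1 : (1 : ℝ) ≤ |(p : ℝ) - r| := by
          have := Int.one_le_abs hrp
          exact_mod_cast this
        have h2 : 1 / (s : ℝ) ≤ |(p : ℝ) / s - r / s| := by
          rw [← sub_div, abs_div, abs_of_pos hs']; gcongr
        have hyp : |y - p / s| ≤ ψ s := by rw [abs_le]; constructor <;> linarith
        have h5 : |(p : ℝ) / s - r / s| ≤ |y - p / s| + |y - r / s| := by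
          have e : (p : ℝ) / s - r / s = (y - r / s) - (y - p / s) := by ring
          rw [e, add_comm]
          exact abs_sub _ _
        have h4 : 2 * ψ s ≤ 1 / (s : ℝ) := by
          rw [le_div_iff₀ hs']
          have : (1 : ℝ) ≤ s := by exact_mod_cast hs1
          nlinarith
        linarith
  · have hbad : volume (shell ψ w p q ∩ obstacle ψ p q) ≤ ENNReal.ofReal (w q * ψ q / 2) := by
      by_contra! hcon
      exact hgood (Finset.mem_filter.2 ⟨Finset.mem_range.2 hp, hcon⟩)
    have hU : volume (shell ψ w p q ∩ tailNbhd ψ q) ≤ ENNReal.ofReal (w q * ψ q / 2) := by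
      refine (measure_mono ?_).trans hbad
      exact subset_inter inter_subset_left (H.shell_inter_tailNbhd_subset T hq.le hpq)
    have h1 := measure_le_inter_add_sdiff volume (shell ψ w p q) (tailNbhd ψ q)
    have hv : volume (shell ψ w p q) =
        ENNReal.ofReal (w q * ψ q / 2) + ENNReal.ofReal (w q * ψ q / 2) := by
      rw [shell, Real.volume_Icc, ← ENNReal.ofReal_add (by positivity) (by positivity)]
      congr 1; ring
    rw [hv] at h1
    have h4 := (ENNReal.add_le_add_iff_left ENNReal.ofReal_ne_top).1
      (h1.trans (add_le_add_left hU _))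
    have e : ((p : ℝ) / q + ψ q - (p / q + (1 - w q) * ψ q)) / 2 = w q * ψ q / 2 := by ring
    rw [e]
    exact h4

/-! ### Children of a node -/

set_option maxHeartbeats 400000 in
/-- Each good node contains `≫ Q²` well-separated good children with denominators in
`[Q/100, Q]`, for every large `Q`. -/
theorem ApproxData.exists_children {ψ w : ℕ → ℝ} (H : ApproxData ψ w) {N : ℕ}
    (T : Threshold ψ w N) {a b : ℝ} {n : ℕ} (hnode : GoodNode ψ w N a b n) :
    ∀ᶠ Q : ℕ in atTop, ∃ F : Finset ℚ, (b - a) * (Q : ℝ) ^ 2 / 1600 ≤ F.card ∧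
      (∀ ρ ∈ F, Q ≤ 100 * ρ.den ∧ ρ.den ≤ Q ∧
        a ≤ (ρ : ℝ) + (1 - w ρ.den) * ψ ρ.den ∧ (ρ : ℝ) + ψ ρ.den ≤ b ∧
        GoodNode ψ w N ((ρ : ℝ) + (1 - w ρ.den) * ψ ρ.den) ((ρ : ℝ) + ψ ρ.den) ρ.den) ∧
      ∀ ρ ∈ F, ∀ ρ' ∈ F, ρ ≠ ρ' →
        ∀ x ∈ Icc ((ρ : ℝ) + (1 - w ρ.den) * ψ ρ.den) ((ρ : ℝ) + ψ ρ.den),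
        ∀ y ∈ Icc ((ρ' : ℝ) + (1 - w ρ'.den) * ψ ρ'.den) ((ρ' : ℝ) + ψ ρ'.den),
          1 / (2 * (Q : ℝ) ^ 2) ≤ |x - y| := by
  classical
  have hl : 0 < b - a := sub_pos.2 hnode.lt
  obtain ⟨m, hm⟩ := eventually_atTop.1
    (H.g_tendsto.eventually_lt_const (show (0 : ℝ) < 1 / 40000 by norm_num))
  have hQ2 : Tendsto (fun Q : ℕ => 200 / (Q : ℝ) ^ 2) atTop (𝓝 0) := by
    refine Tendsto.div_atTop tendsto_const_nhds ?_
    exact (tendsto_pow_atTop (by norm_num)).comp tendsto_natCast_atTop_atTop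
  filter_upwards [volume_smallDenNbhd_le hnode.lt,
    H.sum_card_badNumerators_le T (show 0 < (b - a) / 1600 by positivity),
    hQ2.eventually_lt_const (show 0 < (b - a) / 16 by positivity),
    eventually_ge_atTop (100 * (max m N + 1))] with Q hD hbad hsmall hQ
  have hQ1 : 1 ≤ Q := by omega
  have hQ0 : (0 : ℝ) < Q := by exact_mod_cast hQ1
  -- points of the parent whose approximants of order `Q` are used
  set G : Set ℝ := {x | x ∈ Icc (a + (b - a) / 16) (b - (b - a) / 16) ∧ x ∉ tailNbhd ψ n ∧
    x ∉ smallDenNbhd Q} with hG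
  have hGvol : ENNReal.ofReal ((b - a) / 4) ≤ volume G := by
    have hcov : Icc a b \ tailNbhd ψ n ⊆ G ∪ (Icc a (a + (b - a) / 16) ∪
        (Icc (b - (b - a) / 16) b ∪ Icc a b ∩ smallDenNbhd Q)) := by
      rintro x ⟨hx, hxU⟩
      by_cases h1 : x ≤ a + (b - a) / 16
      · exact Or.inr (Or.inl ⟨hx.1, h1⟩)
      by_cases h2 : b - (b - a) / 16 ≤ x
      · exact Or.inr (Or.inr (Or.inl ⟨h2, hx.2⟩))
      by_cases h3 : x ∈ smallDenNbhd Q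
      · exact Or.inr (Or.inr (Or.inr ⟨hx, h3⟩))
      · exact Or.inl ⟨⟨by linarith, by linarith⟩, hxU, h3⟩
    have h1 := hnode.room.trans (measure_mono hcov)
    have h2 : volume (Icc a (a + (b - a) / 16) ∪
        (Icc (b - (b - a) / 16) b ∪ Icc a b ∩ smallDenNbhd Q)) ≤
        ENNReal.ofReal ((b - a) / 4) := by
      refine (measure_union_le _ _).trans ((add_le_add_right (measure_union_le _ _) _).trans ?_)
      rw [Real.volume_Icc, Real.volume_Icc]
      refine (add_le_add_right (add_le_add_right hD _) _).trans ?_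
      rw [← ENNReal.ofReal_add (by linarith) (by positivity),
        ← ENNReal.ofReal_add (by linarith) (by linarith)]
      exact ENNReal.ofReal_le_ofReal (by linarith)
    have h3 := (h1.trans (measure_union_le _ _)).trans (add_le_add_right h2 _)
    have e : ENNReal.ofReal ((b - a) / 2) =
        ENNReal.ofReal ((b - a) / 4) + ENNReal.ofReal ((b - a) / 4) := by
      rw [← ENNReal.ofReal_add (by positivity) (by positivity)]; congr 1; ring
    rw [e] at h3
    exact (ENNReal.add_le_add_iff_right ENNReal.ofReal_ne_top).1 h3
  -- the Dirichlet approximants of order `Q` of the points of `G`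
  set S : Set ℚ := {ρ | ρ.den ≤ Q ∧ ∃ x ∈ G, |x - ρ| ≤ 1 / ((Q + 1) * ρ.den)} with hS
  have hden : ∀ ρ ∈ S, Q ≤ 100 * ρ.den := by
    rintro ρ ⟨hρ, x, hx, hxρ⟩
    by_contra! hcon
    refine hx.2.2 ⟨ρ.den, ρ.pos, hcon, ρ.num, ?_⟩
    have e : (ρ.num : ℝ) / (ρ.den : ℝ) = ρ := by exact_mod_cast Rat.num_div_den ρ
    rw [e]
    have hd : (0 : ℝ) < ρ.den := by exact_mod_cast ρ.pos
    refine hxρ.trans ?_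
    rw [mul_comm]
    gcongr
    linarith
  have hdenR : ∀ ρ ∈ S, (Q : ℝ) ≤ 100 * ρ.den := fun ρ hρ => by exact_mod_cast hden ρ hρ
  have hψ : ∀ ρ ∈ S, ψ ρ.den ≤ 1 / (4 * (Q : ℝ) ^ 2) := by
    intro ρ hρ
    have h1 := hden ρ hρ
    have h2 := hm ρ.den (by omega)
    have h3 := hdenR ρ hρ
    have h4 := H.pos ρ.den ρ.pos
    rw [le_div_iff₀ (by positivity)]
    have : (Q : ℝ) ^ 2 ≤ (100 * ρ.den) ^ 2 := by gcongr
    nlinarith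
  have hclose : ∀ ρ ∈ S, ∀ x : ℝ, |x - ρ| ≤ 1 / ((Q + 1) * ρ.den) → |x - ρ| ≤ 100 / (Q : ℝ) ^ 2 := by
    intro ρ hρ x hx
    have h3 := hdenR ρ hρ
    have hd : (0 : ℝ) < ρ.den := by exact_mod_cast ρ.pos
    refine hx.trans ?_
    rw [div_le_div_iff₀ (by positivity) (by positivity)]
    nlinarith
  have h100 : 100 / (Q : ℝ) ^ 2 < (b - a) / 16 := by
    have : 100 / (Q : ℝ) ^ 2 ≤ 200 / (Q : ℝ) ^ 2 := by gcongr; norm_num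
    linarith
  -- `G` keeps away from the endpoints of `[a, b]`, so the shells of members of `S` fit inside
  have hmem : ∀ ρ ∈ S, a ≤ (ρ : ℝ) ∧ (ρ : ℝ) + ψ ρ.den ≤ b := by
    rintro ρ hρ
    obtain ⟨_, x, hx, hxρ⟩ := id hρ
    have h1 := abs_le.1 (hclose ρ hρ x hxρ)
    have h2 := hψ ρ hρ
    have h3 : 1 / (4 * (Q : ℝ) ^ 2) ≤ 100 / (Q : ℝ) ^ 2 := by
      rw [div_le_div_iff₀ (by positivity) (by positivity)]
      nlinarith [sq_nonneg (Q : ℝ)]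
    have h4 : 100 / (Q : ℝ) ^ 2 + 100 / (Q : ℝ) ^ 2 = 200 / (Q : ℝ) ^ 2 := by ring
    obtain ⟨hx1, hx2⟩ := hx.1
    constructor <;> linarith
  have hnum : ∀ ρ ∈ S, ((ρ.num.toNat : ℤ) = ρ.num) ∧ ρ.num.toNat < ρ.den := by
    intro ρ hρ
    obtain ⟨h1, h2⟩ := hmem ρ hρ
    have h3 := H.pos ρ.den ρ.pos
    have h4 : (0 : ℝ) ≤ ρ := hnode.nonneg.trans h1
    have h5 : (ρ : ℝ) < 1 := by linarith [hnode.le_one]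
    have h6 : 0 ≤ ρ := by exact_mod_cast h4
    have h7 : ρ < 1 := by exact_mod_cast h5
    have h8 : 0 ≤ ρ.num := Rat.num_nonneg.2 h6
    have h9 : ρ.num < ρ.den := Rat.num_lt_denom_iff.2 h7
    have h10 := Int.toNat_of_nonneg h8
    exact ⟨h10, by omega⟩
  have hval : ∀ ρ ∈ S, ((ρ.num.toNat : ℕ) : ℝ) / (ρ.den : ℝ) = ρ := by
    intro ρ hρ
    have e : (ρ.num : ℝ) / (ρ.den : ℝ) = ρ := by exact_mod_cast Rat.num_div_den ρ
    have e2 : ((ρ.num.toNat : ℕ) : ℝ) = (ρ.num : ℝ) := by exact_mod_cast (hnum ρ hρ).1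
    rw [e2, e]
  have hinj : ∀ ρ ∈ S, ∀ ρ' ∈ S, (⟨ρ.den, ρ.num.toNat⟩ : Σ _ : ℕ, ℕ) = ⟨ρ'.den, ρ'.num.toNat⟩ →
      ρ = ρ' := by
    intro ρ hρ ρ' hρ' heq
    simp only [Sigma.mk.injEq, heq_eq_eq] at heq
    refine Rat.ext ?_ heq.1
    rw [← (hnum ρ hρ).1, ← (hnum ρ' hρ').1, heq.2]
  have hSfin : S.Finite := by
    refine Set.Finite.of_finite_image (f := fun ρ : ℚ => (⟨ρ.den, ρ.num.toNat⟩ : Σ _ : ℕ, ℕ)) ?_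
      (fun ρ hρ ρ' hρ' h => hinj ρ hρ ρ' hρ' h)
    refine ((Finset.range (Q + 1)).sigma fun q => Finset.range q).finite_toSet.subset ?_
    rintro _ ⟨ρ, hρ, rfl⟩
    simp only [Finset.coe_sigma, Finset.coe_range, Set.mem_sigma_iff, mem_Iio]
    exact ⟨Nat.lt_succ_of_le hρ.1, (hnum ρ hρ).2⟩
  set F₀ := hSfin.toFinset with hF₀
  have hF₀S : ∀ ρ, ρ ∈ F₀ ↔ ρ ∈ S := fun ρ => by rw [hF₀, Set.Finite.mem_toFinset]
  -- by Dirichlet's theorem the `100/Q²`-balls around `F₀` cover `G`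
  have hcard₀ : (b - a) * (Q : ℝ) ^ 2 / 800 ≤ F₀.card := by
    have hcov : G ⊆ ⋃ ρ ∈ F₀, Metric.closedBall (ρ : ℝ) (100 / (Q : ℝ) ^ 2) := by
      intro x hx
      obtain ⟨ρ, h1, h2⟩ := Real.exists_rat_abs_sub_le_and_den_le x hQ1
      have hρ : ρ ∈ S := ⟨h2, x, hx, h1⟩
      simp only [mem_iUnion]
      refine ⟨ρ, (hF₀S ρ).2 hρ, ?_⟩
      rw [Metric.mem_closedBall, Real.dist_eq]
      exact hclose ρ hρ x h1
    have h1 := hGvol.trans ((measure_mono hcov).trans (measure_biUnion_finset_le _ _))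
    simp only [Real.volume_closedBall, Finset.sum_const, nsmul_eq_mul] at h1
    rw [← ENNReal.ofReal_natCast, ← ENNReal.ofReal_mul (Nat.cast_nonneg _),
      ENNReal.ofReal_le_ofReal_iff (mul_nonneg (Nat.cast_nonneg _) (by positivity))] at h1
    have e : (F₀.card : ℝ) * (2 * (100 / (Q : ℝ) ^ 2)) = F₀.card * 200 / (Q : ℝ) ^ 2 := by ring
    rw [e, le_div_iff₀ (by positivity)] at h1
    linarith
  set F := F₀.filter (fun ρ => ρ.num.toNat ∉ badNumerators ψ w ρ.den) with hF
  have hFS : ∀ ρ ∈ F, ρ ∈ S := fun ρ hρ => (hF₀S ρ).1 (Finset.mem_filter.1 hρ).1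
  refine ⟨F, ?_, ?_, ?_⟩
  · have hsplit := Finset.card_filter_add_card_filter_not (s := F₀)
      (fun ρ => ρ.num.toNat ∉ badNumerators ψ w ρ.den)
    have hbadcard : (F₀.filter fun ρ => ¬ ρ.num.toNat ∉ badNumerators ψ w ρ.den).card ≤
        ∑ q ∈ (Finset.Ioc 0 Q).filter (fun q => Q ≤ 100 * q), (badNumerators ψ w q).card := by
      rw [← Finset.card_sigma]
      refine Finset.card_le_card_of_injOn
        (fun ρ : ℚ => (⟨ρ.den, ρ.num.toNat⟩ : Σ _ : ℕ, ℕ)) ?_ ?_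
      · intro ρ hρ
        rw [Finset.mem_coe, Finset.mem_filter, not_not] at hρ
        have hρS := (hF₀S ρ).1 hρ.1
        rw [Finset.mem_coe, Finset.mem_sigma, Finset.mem_filter, Finset.mem_Ioc]
        exact ⟨⟨⟨ρ.pos, hρS.1⟩, hden ρ hρS⟩, hρ.2⟩
      · intro ρ hρ ρ' hρ' heq
        rw [Finset.mem_coe, Finset.mem_filter] at hρ hρ'
        exact hinj ρ ((hF₀S ρ).1 hρ.1) ρ' ((hF₀S ρ').1 hρ'.1) heq
    have h1 : ((F₀.filter fun ρ => ¬ ρ.num.toNat ∉ badNumerators ψ w ρ.den).card : ℝ) ≤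
        (b - a) / 1600 * (Q : ℝ) ^ 2 := le_trans (by exact_mod_cast hbadcard) hbad
    have h2 : (F.card : ℝ) +
        (F₀.filter fun ρ => ¬ ρ.num.toNat ∉ badNumerators ψ w ρ.den).card = F₀.card := by
      exact_mod_cast hsplit
    linarith
  · intro ρ hρ
    have hρS := hFS ρ hρ
    have hd := hden ρ hρS
    obtain ⟨hm1, hm2⟩ := hmem ρ hρS
    have hu := H.pos ρ.den ρ.pos
    have hNd : N < ρ.den := by omega
    have hw1 := T.wle ρ.den hNd.le
    have hpos : 0 ≤ (1 - w ρ.den) * ψ ρ.den := mul_nonneg (by linarith) hu.le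
    obtain ⟨hdQ, x, hx, hxρ⟩ := id hρS
    refine ⟨hd, hdQ, by linarith, hm2, ?_⟩
    have hv := hval ρ hρS
    have hcop : Nat.Coprime ρ.num.toNat ρ.den := by
      have h1 := ρ.reduced
      have h2 : ρ.num.natAbs = ρ.num.toNat := by
        have := (hnum ρ hρS).1
        omega
      rwa [h2] at h1
    have hd0 : (0 : ℝ) < ρ.den := by exact_mod_cast ρ.pos
    have hdQ' : (ρ.den : ℝ) ≤ Q := by exact_mod_cast hdQ
    have := H.goodNode_child T hnode hNd hcop (hnum ρ hρS).2 (Finset.mem_filter.1 hρ).2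
      (by rw [hv]; exact hm1) (by rw [hv]; exact hm2) hx.2.1 (x := x) (by
        rw [hv]
        refine hxρ.trans ?_
        rw [pow_two]
        gcongr
        linarith)
    rw [hv] at this
    exact this
  · intro ρ hρ ρ' hρ' hne x hx y hy
    have hρS := hFS ρ hρ
    have hρS' := hFS ρ' hρ'
    have h1 : 1 / (Q : ℝ) ^ 2 ≤ |(ρ : ℝ) - ρ'| := by
      have e : (ρ.num : ℝ) / (ρ.den : ℝ) = ρ := by exact_mod_cast Rat.num_div_den ρ
      have e' : (ρ'.num : ℝ) / (ρ'.den : ℝ) = ρ' := by exact_mod_cast Rat.num_div_den ρ'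
      have hne' : ρ.num * ρ'.den - ρ'.num * ρ.den ≠ 0 := by
        intro h0
        exact hne (Rat.eq_iff_mul_eq_mul.2 (by linarith))
      have := abs_div_sub_div_ge (q := ρ.den) (s := ρ'.den) (by exact_mod_cast ρ.pos)
        (by exact_mod_cast ρ'.pos) hne'
      simp only [Int.cast_natCast] at this
      rw [e, e'] at this
      refine le_trans ?_ this
      have hd0 : (0 : ℝ) < ρ.den := by exact_mod_cast ρ.pos
      have hd0' : (0 : ℝ) < ρ'.den := by exact_mod_cast ρ'.pos
      have hdQ : (ρ.den : ℝ) ≤ Q := by exact_mod_cast hρS.1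
      have hdQ' : (ρ'.den : ℝ) ≤ Q := by exact_mod_cast hρS'.1
      rw [pow_two]
      gcongr
    have key : ∀ σ ∈ F, ∀ z ∈ Icc ((σ : ℝ) + (1 - w σ.den) * ψ σ.den) ((σ : ℝ) + ψ σ.den),
        |z - σ| ≤ 1 / (4 * (Q : ℝ) ^ 2) := by
      intro σ hσ z hz
      have hu := H.pos σ.den σ.pos
      have hd := hden σ (hFS σ hσ)
      have hw1 := T.wle σ.den (by omega)
      have hpos : 0 ≤ (1 - w σ.den) * ψ σ.den := mul_nonneg (by linarith) hu.le
      refine le_trans ?_ (hψ σ (hFS σ hσ))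
      rw [abs_le]
      constructor <;> linarith [hz.1, hz.2]
    have h2 := key ρ hρ x hx
    have h3 := key ρ' hρ' y hy
    have h4 : |(ρ : ℝ) - ρ'| ≤ |x - ρ| + |x - y| + |y - ρ'| := by
      have e : (ρ : ℝ) - ρ' = -(x - ρ) + (x - y) + (y - ρ') := by ring
      rw [e]
      refine (abs_add_three _ _ _).trans ?_
      rw [abs_neg]
    have e1 : 1 / (4 * (Q : ℝ) ^ 2) = 1 / (Q : ℝ) ^ 2 / 4 := by field_simp
    have e2 : 1 / (2 * (Q : ℝ) ^ 2) = 1 / (Q : ℝ) ^ 2 / 2 := by field_simp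
    rw [e1] at h2 h3
    rw [e2]
    linarith

/-! ### Levels of the Cantor construction -/

/-- One level of the Cantor construction: `M` nodes `[a i, b i]` with associated denominators `n i`
for `i < M`, obtained by splitting each earlier node into `N` children of denominator at most `Q`;
`l` is a lower bound for the lengths of the nodes. -/
structure Level where
  M : ℕ
  N : ℕ
  Q : ℕ
  l : ℝ
  a : ℕ → ℝ
  b : ℕ → ℝ
  n : ℕ → ℕ

/-- All nodes of the level are good and have length at least `l > 0`. -/
structure Level.Valid (ψ w : ℕ → ℝ) (N₀ : ℕ) (L : Level) : Prop where
  hM : 0 < L.M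
  hQ : 0 < L.Q
  hl : 0 < L.l
  good : ∀ i < L.M, GoodNode ψ w N₀ (L.a i) (L.b i) (L.n i)
  len : ∀ i < L.M, L.l ≤ L.b i - L.a i

/-- `L'` refines `L`: the children of node `i` of `L` are the nodes `i * L'.N, …` of `L'`. The last
two fields give the mass distribution its exponent `t`. -/
structure Level.Step (ψ : ℕ → ℝ) (t : ℝ) (L L' : Level) : Prop where
  hN : 2 ≤ L'.N
  hM : L'.M = L.M * L'.N
  hQ : L.Q < L'.Q
  nest : ∀ i < L'.M, L.a (i / L'.N) ≤ L'.a i ∧ L'.b i ≤ L.b (i / L'.N)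
  den : ∀ i < L'.M, L.Q < L'.n i ∧
    ∃ p : ℤ, ∀ x ∈ Icc (L'.a i) (L'.b i), |x - (p : ℝ) / L'.n i| ≤ ψ (L'.n i)
  sep : ∀ i j, i < L'.M → j < L'.M → i ≠ j → i / L'.N = j / L'.N →
    ∀ x ∈ Icc (L'.a i) (L'.b i), ∀ y ∈ Icc (L'.a j) (L'.b j), 1 / (2 * (L'.Q : ℝ) ^ 2) ≤ |x - y|
  grow : 2 ≤ (L'.M : ℝ) * (L'.l / 6400) ^ t
  gap : L.l / 6400 ≤ 1 / (2 * (L'.Q : ℝ) ^ 2) * L'.N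

theorem exists_enumeration (F : Finset ℚ) (m : ℕ) (hm : m ≤ F.card) :
    ∃ f : ℕ → ℚ, (∀ j < m, f j ∈ F) ∧ ∀ i < m, ∀ j < m, f i = f j → i = j := by
  refine ⟨fun j => if h : j < F.card then (F.equivFin.symm ⟨j, h⟩ : ℚ) else 0, ?_, ?_⟩
  · intro j hj
    simp only [dif_pos (hj.trans_le hm)]
    exact (F.equivFin.symm _).2
  · intro i hi j hj h
    simp only [dif_pos (hi.trans_le hm), dif_pos (hj.trans_le hm)] at h
    have := F.equivFin.symm.injective (Subtype.ext h)
    simpa using this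

set_option maxHeartbeats 400000 in
/-- The next level uses a very large `Q` with `ψ(Q) > Q^(-2/s)`: every node gets exactly
`⌊l Q² / 1600⌋` children, of length at least `Q^(-θ)` for some `θ < 2/t`. -/
theorem ApproxData.exists_step {ψ w : ℕ → ℝ} (H : ApproxData ψ w) {N₀ : ℕ}
    (T : Threshold ψ w N₀) {t s : ℝ} (ht : 0 < t) (hts : t < s)
    (hfreq : ∃ᶠ Q : ℕ in atTop, (Q : ℝ) ^ (-2 / s) < ψ Q) (L : Level) (hL : L.Valid ψ w N₀) :
    ∃ L' : Level, L'.Valid ψ w N₀ ∧ L.Step ψ t L' := by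
  have hs : 0 < s := ht.trans hts
  have hl := hL.hl
  -- `θ` lies strictly between `2 / s` and `2 / t`
  set ε : ℝ := 1 / t - 1 / s with hε
  have hε0 : 0 < ε := by
    rw [hε, sub_pos]
    exact one_div_lt_one_div_of_lt ht hts
  set θ : ℝ := 2 / s + ε with hθ
  have hθt : θ * t < 2 := by
    have e : θ * t = t / s + 1 := by rw [hθ, hε]; field_simp; ring
    have : t / s < 1 := (div_lt_one hs).2 hts
    linarith
  obtain ⟨q₀, hq₀⟩ := eventually_atTop.1 (H.wslow ε hε0)
  have hchildren := (Finset.range L.M).eventually_all.2 fun i hi =>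
    H.exists_children T (hL.good i (Finset.mem_range.1 hi))
  have hcast : Tendsto (fun Q : ℕ => (Q : ℝ)) atTop atTop := tendsto_natCast_atTop_atTop
  have hE1 : ∀ᶠ Q : ℕ in atTop, 2 ≤ L.l / 1600 * (Q : ℝ) ^ 2 :=
    (((tendsto_pow_atTop two_ne_zero).comp hcast).const_mul_atTop
      (show 0 < L.l / 1600 by positivity)).eventually_ge_atTop 2
  have hE2 : ∀ᶠ Q : ℕ in atTop, 2 ≤ L.l / 3200 * (1 / 6400) ^ t * (Q : ℝ) ^ (2 - θ * t) :=
    (((tendsto_rpow_atTop (by linarith)).comp hcast).const_mul_atTop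
      (show 0 < L.l / 3200 * (1 / 6400 : ℝ) ^ t by positivity)).eventually_ge_atTop 2
  obtain ⟨Q, hspecial, hch, h1, h2, h3, h4⟩ := (hfreq.and_eventually (hchildren.and (hE1.and
    (hE2.and ((eventually_ge_atTop (100 * (q₀ + 1))).and
      (eventually_ge_atTop (100 * (L.Q + 1)))))))).exists
  have hQ0 : (0 : ℝ) < Q := by exact_mod_cast (by omega : 0 < Q)
  choose! F hF using hch
  set N' := ⌊L.l / 1600 * (Q : ℝ) ^ 2⌋₊ with hN'
  have hN'2 : 2 ≤ N' := Nat.le_floor (by exact_mod_cast h1)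
  have hN'le : (N' : ℝ) ≤ L.l / 1600 * (Q : ℝ) ^ 2 := Nat.floor_le (by positivity)
  have hN'ge : L.l / 3200 * (Q : ℝ) ^ 2 ≤ N' := by
    have := Nat.lt_floor_add_one (L.l / 1600 * (Q : ℝ) ^ 2)
    rw [← hN'] at this
    linarith
  have hcard : ∀ i < L.M, N' ≤ (F i).card := by
    intro i hi
    have hc := (hF i (Finset.mem_range.2 hi)).1
    have hlen := hL.len i hi
    have : (N' : ℝ) ≤ (F i).card := by
      refine hN'le.trans (le_trans ?_ hc)
      calc L.l / 1600 * (Q : ℝ) ^ 2 ≤ (L.b i - L.a i) / 1600 * (Q : ℝ) ^ 2 := by gcongr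
        _ = _ := by ring
    exact_mod_cast this
  have henum : ∀ i, ∃ f : ℕ → ℚ, i < L.M →
      (∀ j < N', f j ∈ F i) ∧ ∀ j < N', ∀ j' < N', f j = f j' → j = j' := by
    intro i
    by_cases hi : i < L.M
    · obtain ⟨f, hf⟩ := exists_enumeration (F i) N' (hcard i hi)
      exact ⟨f, fun _ => hf⟩
    · exact ⟨fun _ => 0, fun h => absurd h hi⟩
  choose f hf using henum
  set ρ : ℕ → ℚ := fun i => f (i / N') (i % N') with hρ
  have hdiv : ∀ i < L.M * N', i / N' < L.M := fun i hi =>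
    (Nat.div_lt_iff_lt_mul (by omega)).2 hi
  have hρF : ∀ i < L.M * N', ρ i ∈ F (i / N') := fun i hi =>
    (hf _ (hdiv i hi)).1 _ (Nat.mod_lt _ (by omega))
  have hprop : ∀ i < L.M * N', _ := fun i hi =>
    (hF _ (Finset.mem_range.2 (hdiv i hi))).2.1 _ (hρF i hi)
  have hlpos : (0 : ℝ) < (Q : ℝ) ^ (-θ) := by positivity
  refine ⟨⟨L.M * N', N', Q, (Q : ℝ) ^ (-θ),
    fun i => (ρ i : ℝ) + (1 - w (ρ i).den) * ψ (ρ i).den,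
    fun i => (ρ i : ℝ) + ψ (ρ i).den, fun i => (ρ i).den⟩, ⟨?_, ?_, hlpos, ?_, ?_⟩,
    ⟨hN'2, rfl, by simp only; omega, ?_, ?_, ?_, ?_, ?_⟩⟩
  · exact Nat.mul_pos hL.hM (by omega)
  · simp only; omega
  · intro i hi
    exact (hprop i hi).2.2.2.2
  · intro i hi
    obtain ⟨p1, p2, -⟩ := hprop i hi
    have hq1 : 1 ≤ (ρ i).den := (ρ i).pos
    have hq : (0 : ℝ) < (ρ i).den := by exact_mod_cast hq1
    have hqQ : ((ρ i).den : ℝ) ≤ Q := by exact_mod_cast p2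
    have hψ : (Q : ℝ) ^ (-2 / s) ≤ ψ (ρ i).den := hspecial.le.trans (H.psi_anti hq1 p2)
    have hw : (Q : ℝ) ^ (-ε) ≤ w (ρ i).den := by
      refine le_trans ?_ (hq₀ (ρ i).den (by omega))
      exact Real.rpow_le_rpow_of_nonpos hq hqQ (by linarith)
    have e : (Q : ℝ) ^ (-θ) = (Q : ℝ) ^ (-ε) * (Q : ℝ) ^ (-2 / s) := by
      rw [← Real.rpow_add hQ0]; congr 1; rw [hθ]; ring
    simp only
    rw [e]
    have : (Q : ℝ) ^ (-ε) * (Q : ℝ) ^ (-2 / s) ≤ w (ρ i).den * ψ (ρ i).den := by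
      gcongr
      exact (H.wpos _ hq1).le
    linarith
  · intro i hi
    exact ⟨(hprop i hi).2.2.1, (hprop i hi).2.2.2.1⟩
  · intro i hi
    obtain ⟨p1, p2, p3, p4, p5⟩ := hprop i hi
    refine ⟨by simp only; omega, (ρ i).num, ?_⟩
    intro x hx
    have e : ((ρ i).num : ℝ) / ((ρ i).den : ℝ) = ρ i := by exact_mod_cast Rat.num_div_den (ρ i)
    simp only at hx ⊢
    rw [e]
    have hu := H.pos (ρ i).den (ρ i).pos
    have hw1 := T.wle (ρ i).den p5.le
    have hpos : 0 ≤ (1 - w (ρ i).den) * ψ (ρ i).den := mul_nonneg (by linarith) hu.le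
    rw [abs_le]
    constructor <;> linarith [hx.1, hx.2]
  · intro i j hi hj hij hdivij x hx y hy
    simp only at hi hj hdivij hx hy ⊢
    have hj' := hρF j hj
    rw [← hdivij] at hj'
    refine (hF _ (Finset.mem_range.2 (hdiv i hi))).2.2 _ (hρF i hi) _ hj' ?_ x hx y hy
    intro heq
    apply hij
    simp only [hρ] at heq
    rw [← hdivij] at heq
    have := (hf _ (hdiv i hi)).2 _ (Nat.mod_lt i (by omega)) _ (Nat.mod_lt j (by omega)) heq
    rw [← Nat.div_add_mod i N', ← Nat.div_add_mod j N', hdivij, this]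
  · simp only
    refine h2.trans ?_
    have hM1 : (1 : ℝ) ≤ L.M := by exact_mod_cast hL.hM
    have e1 : ((Q : ℝ) ^ (-θ) / 6400) ^ t = (1 / 6400) ^ t * (Q : ℝ) ^ (-θ * t) := by
      rw [div_eq_mul_one_div, Real.mul_rpow hlpos.le (by norm_num), ← Real.rpow_mul hQ0.le, mul_comm]
    have e2 : (Q : ℝ) ^ (2 - θ * t) = (Q : ℝ) ^ 2 * (Q : ℝ) ^ (-θ * t) := by
      rw [← Real.rpow_natCast, ← Real.rpow_add hQ0]; congr 1; push_cast; ring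
    rw [e1, e2]
    have hN1 : (N' : ℝ) ≤ ((L.M * N' : ℕ) : ℝ) := by
      push_cast
      nlinarith [Nat.cast_nonneg (α := ℝ) N']
    calc L.l / 3200 * (1 / 6400) ^ t * ((Q : ℝ) ^ 2 * (Q : ℝ) ^ (-θ * t))
        = L.l / 3200 * (Q : ℝ) ^ 2 * ((1 / 6400) ^ t * (Q : ℝ) ^ (-θ * t)) := by ring
      _ ≤ ((L.M * N' : ℕ) : ℝ) * ((1 / 6400) ^ t * (Q : ℝ) ^ (-θ * t)) := by
          gcongr
          exact hN'ge.trans hN1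
  · simp only
    calc L.l / 6400 = 1 / (2 * (Q : ℝ) ^ 2) * (L.l / 3200 * (Q : ℝ) ^ 2) := by field_simp; norm_num
      _ ≤ _ := by gcongr

theorem ApproxData.exists_threshold {ψ w : ℕ → ℝ} (H : ApproxData ψ w) :
    ∃ N, Threshold ψ w N ∧ GoodNode ψ w N 0 1 N := by
  have h1 := H.wlim.eventually_lt_const (show (0 : ℝ) < 1 / 4 by norm_num)
  have h2 := H.g_tendsto.eventually_lt_const (show (0 : ℝ) < 1 / 100 by norm_num)
  have h3 := ((tendsto_sum_nat_add fun q : ℕ => (q : ℝ) * ψ q).comp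
    (tendsto_add_atTop_nat 1)).eventually_lt_const (show (0 : ℝ) < 1 / 32 by norm_num)
  obtain ⟨m₁, hm₁⟩ := eventually_atTop.1 h1
  obtain ⟨m₂, hm₂⟩ := eventually_atTop.1 h2
  obtain ⟨m₃, hm₃⟩ := eventually_atTop.1 h3
  set N := m₁ + m₂ + m₃ + 1
  have T : Threshold ψ w N := ⟨by omega, fun s hs => (hm₁ s (by omega)).le,
    fun s hs => (hm₂ s (by omega)).le⟩
  exact ⟨N, T, H.goodNode_root T (hm₃ N (by omega)).le⟩

/-- If `ψ(Q) > Q^(-2/s)` infinitely often, the Cantor construction can be run along such `Q`, and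
yields dimension at least any `t < s`. -/
theorem ApproxData.le_dimH {ψ w : ℕ → ℝ} (H : ApproxData ψ w) {N₀ : ℕ} (T : Threshold ψ w N₀)
    (hroot : GoodNode ψ w N₀ 0 1 N₀) {t s : ℝ} (ht : 0 < t) (ht1 : t ≤ 1) (hts : t < s)
    (hfreq : ∃ᶠ Q : ℕ in atTop, (Q : ℝ) ^ (-2 / s) < ψ Q) {E : Set ℝ}
    (hE : ∀ x : ℝ, (∀ q : ℕ, N₀ < q → ∀ r : ℤ, (1 - w q) * ψ q ≤ |x - (r : ℝ) / q|) →
      (∀ m : ℕ, ∃ q : ℕ, m < q ∧ ∃ p : ℤ, |x - (p : ℝ) / q| ≤ ψ q) → x ∈ E) :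
    ENNReal.ofReal t ≤ dimH E := by
  choose! next hnext hstep using fun L hL => H.exists_step T ht hts hfreq L hL
  set L₀ : Level := ⟨1, 2, 1, 1, fun _ => 0, fun _ => 1, fun _ => N₀⟩ with hL₀
  have hL₀v : L₀.Valid ψ w N₀ :=
    ⟨one_pos, one_pos, one_pos, fun _ _ => hroot, fun _ _ => by simp [hL₀]⟩
  set lev : ℕ → Level := fun k => Nat.rec L₀ (fun _ L => next L) k with hlev
  have hsucc : ∀ k, lev (k + 1) = next (lev k) := fun k => rfl
  have hvalid : ∀ k, (lev k).Valid ψ w N₀ := by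
    intro k
    induction k with
    | zero => exact hL₀v
    | succ k ih => rw [hsucc]; exact hnext _ ih
  have hst : ∀ k, (lev k).Step ψ t (lev (k + 1)) := fun k => by
    rw [hsucc]; exact hstep _ (hvalid k)
  have hQmono : StrictMono fun k => (lev k).Q := strictMono_nat_of_lt_succ fun k => (hst k).hQ
  have hQpos : ∀ k, (0 : ℝ) < (lev k).Q := fun k => by exact_mod_cast (hvalid k).hQ
  refine le_dimH_of_cantor ht ht1 (fun k => (lev k).M) (fun k => (lev (k + 1)).N)
    (fun k => 1 / (2 * ((lev k).Q : ℝ) ^ 2)) (fun k => (lev k).a) (fun k => (lev k).b)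
    rfl (fun k => (hst k).hM) (fun k => (hst k).hN)
    (fun k i hi => ((hvalid k).good i hi).lt.le) (fun k => (hst k).nest)
    (fun k => by have := hQpos k; positivity) ?_ ?_ (fun k => (hst k).sep) ?_ ?_
  · intro k m hkm
    have h1 : ((lev k).Q : ℝ) ≤ (lev m).Q := by exact_mod_cast hQmono.monotone hkm
    have := hQpos k
    simp only
    gcongr
  · refine Tendsto.div_atTop tendsto_const_nhds (Tendsto.const_mul_atTop two_pos ?_)
    exact (tendsto_pow_atTop two_ne_zero).comp
      (tendsto_natCast_atTop_atTop.comp hQmono.tendsto_atTop)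
  · intro k hk
    obtain ⟨k, rfl⟩ := Nat.exists_eq_add_of_le' hk
    refine (hst k).grow.trans ?_
    have h1 := (hst (k + 1)).gap
    have h2 := (hvalid (k + 1)).hl
    gcongr
  · intro x hx
    have hlarge : ∀ m : ℕ, m ≤ (lev m).Q := fun m => hQmono.le_apply
    refine hE x (fun q hq r => ?_) fun m => ?_
    · obtain ⟨i, hi, hxi⟩ := hx (q + 1)
      have h1 := ((hst q).den i hi).1
      exact ((hvalid (q + 1)).good i hi).far q hq ((hlarge q).trans h1.le) r x hxi
    · obtain ⟨i, hi, hxi⟩ := hx (m + 1)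
      obtain ⟨h1, p, hp⟩ := (hst m).den i hi
      exact ⟨_, (hlarge m).trans_lt h1, p, hp x hxi⟩

/-! ### Inclusions and the comparison of dimensions -/

/-- A rational number equals fractions with arbitrarily large denominators, which violates the lower
bound in `E(Ψ, ω)`. -/
theorem irrational_of_mem_ESet {Ψ ω : ℝ → ℝ} (hΨpos : ∀ q : ℝ, 0 < q → 0 < Ψ q)
    (hωmem : ∀ q : ℝ, 0 < q → ω q ∈ Set.Ioo (0 : ℝ) 1) {x : ℝ} (hx : x ∈ ESet Ψ ω) :
    Irrational x := by
  rintro ⟨ρ, rfl⟩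
  obtain ⟨-, Q, hQ⟩ := hx
  have hd := ρ.pos
  -- the fraction equals `ρ`, written with a denominator exceeding `Q`
  have h := hQ ((Q + 1) * ρ.den) (by nlinarith) ((Q + 1) * ρ.num)
  have hq : (0 : ℝ) < (((Q + 1) * ρ.den : ℕ) : ℝ) := by positivity
  have e : (((Q + 1) * ρ.num : ℤ) : ℝ) / (((Q + 1) * ρ.den : ℕ) : ℝ) = ρ := by
    have e1 : (ρ.num : ℝ) / (ρ.den : ℝ) = ρ := by exact_mod_cast Rat.num_div_den ρ
    push_cast
    rw [mul_div_mul_left _ _ (by positivity), e1]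
  rw [e, sub_self, abs_zero] at h
  have := mul_pos (sub_pos.2 (hωmem _ hq).2) (hΨpos _ hq)
  linarith

theorem ESet_subset_EExactSet {Ψ ω : ℝ → ℝ} (hΨpos : ∀ q : ℝ, 0 < q → 0 < Ψ q)
    (hωmem : ∀ q : ℝ, 0 < q → ω q ∈ Set.Ioo (0 : ℝ) 1) (hωlim : Tendsto ω atTop (𝓝 0)) :
    ESet Ψ ω ⊆ EExactSet Ψ := by
  intro x hx
  have hirr := irrational_of_mem_ESet hΨpos hωmem hx
  obtain ⟨hW, Q, hQ⟩ := hx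
  -- below the threshold `Q` an irrational point leaves a positive constant for each `q`
  have hsmall : ∀ q : ℕ, ∃ c ∈ Ioo (0 : ℝ) 1, 0 < q → ∀ p : ℤ, c * Ψ q ≤ |x - (p : ℝ) / q| := by
    intro q
    rcases Nat.eq_zero_or_pos q with rfl | hq
    · exact ⟨1 / 2, by norm_num, fun h => absurd h (lt_irrefl 0)⟩
    have hq' : (0 : ℝ) < q := by exact_mod_cast hq
    have hΨ := hΨpos q hq'
    set δ := |(q : ℝ) * x - round ((q : ℝ) * x)| with hδ
    have hδ0 : 0 < δ := by
      rw [hδ, abs_pos, sub_ne_zero]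
      exact (hirr.natCast_mul hq.ne').ne_int _
    refine ⟨min (1 / 2) (δ / q / Ψ q), ⟨by positivity, ?_⟩, fun _ p => ?_⟩
    · exact (min_le_left _ _).trans_lt (by norm_num)
    · have h1 : δ ≤ |(q : ℝ) * x - p| := round_le _ _
      have e : x - (p : ℝ) / q = (q * x - p) / q := by field_simp
      rw [e, abs_div, abs_of_pos hq']
      calc min (1 / 2) (δ / q / Ψ q) * Ψ q ≤ δ / q / Ψ q * Ψ q := by
            gcongr; exact min_le_right _ _
        _ = δ / q := by field_simp
        _ ≤ _ := by gcongr
  choose c hc hcp using hsmall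
  refine ⟨hW, fun q => if Q + 1 ≤ q then 1 - ω q else c q, fun q => ?_, ?_, fun p q hq => ?_⟩
  · simp only
    split_ifs with h
    · have hq : (0 : ℝ) < q := by exact_mod_cast (by omega : 0 < q)
      have := hωmem q hq
      exact ⟨by linarith [this.2], by linarith [this.1]⟩
    · exact hc q
  · have h1 : Tendsto (fun q : ℕ => 1 - ω q) atTop (𝓝 (1 - 0)) :=
      tendsto_const_nhds.sub (hωlim.comp tendsto_natCast_atTop_atTop)
    rw [sub_zero] at h1
    refine h1.congr' ?_
    filter_upwards [eventually_ge_atTop (Q + 1)] with q hq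
    rw [if_pos hq]
  · simp only
    split_ifs with h
    · exact hQ q (by omega) p
    · exact hcp q hq p

theorem EExactSet_subset_BadSet {Ψ : ℝ → ℝ} (hΨpos : ∀ q : ℝ, 0 < q → 0 < Ψ q) :
    EExactSet Ψ ⊆ BadSet Ψ := by
  rintro x ⟨hW, c, -, hlim, hc⟩
  obtain ⟨Q, hQ⟩ := eventually_atTop.1 (hlim.eventually_const_lt (show (1 / 2 : ℝ) < 1 by norm_num))
  refine ⟨hW, 1 / 2, by norm_num, Q + 1, fun q hq p => ?_⟩
  have hq' : (0 : ℝ) < q := by exact_mod_cast (by omega : 0 < q)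
  refine le_trans ?_ (hc p q (by omega))
  have := hΨpos q hq'
  have := hQ q (by omega)
  gcongr

theorem approxData_of_hypotheses {Ψ ω : ℝ → ℝ}
    (hΨpos : ∀ q : ℝ, 0 < q → 0 < Ψ q)
    (hωmem : ∀ q : ℝ, 0 < q → ω q ∈ Set.Ioo (0 : ℝ) 1)
    (hmono : AntitoneOn (fun q : ℝ => q ^ 2 * Ψ q) (Set.Ioi 0))
    (hsum : Summable (fun q : ℕ => (q : ℝ) * Ψ (q : ℝ)))
    (hωlim : Tendsto ω atTop (𝓝 0))
    (hωslow : Tendsto (fun q : ℝ => -Real.log (ω q) / Real.log q) atTop (𝓝 0)) :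
    ApproxData (fun q => Ψ q) (fun q => ω q) where
  pos q hq := hΨpos q (by exact_mod_cast hq)
  wpos q hq := (hωmem q (by exact_mod_cast hq)).1
  anti q r hq hqr := hmono (mem_Ioi.2 (by exact_mod_cast hq))
    (mem_Ioi.2 (by exact_mod_cast hq.trans hqr)) (by exact_mod_cast hqr)
  summ := hsum
  wlim := hωlim.comp tendsto_natCast_atTop_atTop
  wslow ε hε := by
    have h := (hωslow.comp tendsto_natCast_atTop_atTop).eventually_lt_const hε
    filter_upwards [h, eventually_ge_atTop 2] with q hq hq2
    simp only [Function.comp_apply] at hq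
    have hq1 : (1 : ℝ) < q := by exact_mod_cast hq2
    have hq0 : (0 : ℝ) < q := by linarith
    have hlog := Real.log_pos hq1
    rw [div_lt_iff₀ hlog] at hq
    rw [Real.rpow_def_of_pos hq0, ← Real.le_log_iff_exp_le (hωmem q hq0).1]
    linarith

theorem dimH_WSet_le_dimH_ESet {Ψ ω : ℝ → ℝ}
    (H : ApproxData (fun q => Ψ q) (fun q => ω q)) :
    dimH (WSet Ψ) ≤ dimH (ESet Ψ ω) := by
  obtain ⟨N, T, hroot⟩ := H.exists_threshold
  refine le_of_forall_lt fun d hd => ?_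
  have hW1 : dimH (WSet Ψ) ≤ 1 := by
    have := dimH_mono (subset_univ (WSet Ψ))
    rwa [Real.dimH_univ] at this
  obtain ⟨t, hdt, htW⟩ := ENNReal.lt_iff_exists_nnreal_btwn.1 hd
  obtain ⟨s, hts, hsW⟩ := ENNReal.lt_iff_exists_nnreal_btwn.1 htW
  have hts' : (t : ℝ) < s := by exact_mod_cast hts
  have ht0 : (0 : ℝ) < t := by
    have : (0 : ℝ≥0∞) < t := (zero_le).trans_lt hdt
    exact_mod_cast this
  have ht1 : (t : ℝ) ≤ 1 := by
    have : (t : ℝ≥0∞) ≤ 1 := htW.le.trans hW1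
    exact_mod_cast this
  refine hdt.trans_le ?_
  rw [← ENNReal.ofReal_coe_nnreal]
  refine H.le_dimH T hroot ht0 ht1 hts' ?_ ?_
  · intro hcon
    have hev : ∀ᶠ q : ℕ in atTop, Ψ q ≤ (q : ℝ) ^ (-2 / (s : ℝ)) := by
      filter_upwards [hcon] with q hq using not_lt.1 hq
    have := dimH_WSet_le (ht0.trans hts') hev
    rw [ENNReal.ofReal_coe_nnreal] at this
    exact absurd hsW (not_lt.2 this)
  · intro x hfar happ
    refine ⟨?_, N + 1, fun q hq p => hfar q hq p⟩
    -- approximations exist with arbitrarily large denominators, hence infinitely many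
    intro hfin
    obtain ⟨m, hm⟩ := (hfin.image Prod.snd).bddAbove
    obtain ⟨q, hq, p, hp⟩ := happ m
    have hmem : q ∈ Prod.snd '' {pq : ℤ × ℕ | 0 < pq.2 ∧
        |x - (pq.1 : ℝ) / (pq.2 : ℝ)| ≤ Ψ (pq.2 : ℝ)} := ⟨(p, q), ⟨by simp only; omega, hp⟩, rfl⟩
    exact absurd (hm hmem) (not_le.2 hq)

/-- **Theorem.** Suppose `q ↦ q²Ψ(q)` and `q ↦ q²Ψ(q)ω(q)` are non-increasing on `(0,∞)`,
`Σ_{q≥1} qΨ(q) < ∞`, `ω(q) → 0` and `(−log ω(q))/log q → 0`.  Then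
`dim_H(E(Ψ,ω)) = dim_H(E(Ψ)) = dim_H(Bad(Ψ)) = dim_H(W(Ψ))`. -/
theorem dimH_ESet_coincidence (Ψ ω : ℝ → ℝ)
    (hΨpos : ∀ q : ℝ, 0 < q → 0 < Ψ q)
    (hωmem : ∀ q : ℝ, 0 < q → ω q ∈ Set.Ioo (0 : ℝ) 1)
    (hmono : AntitoneOn (fun q : ℝ => q ^ 2 * Ψ q) (Set.Ioi 0))
    (hmono' : AntitoneOn (fun q : ℝ => q ^ 2 * Ψ q * ω q) (Set.Ioi 0))
    (hsum : Summable (fun q : ℕ => (q : ℝ) * Ψ (q : ℝ)))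
    (hωlim : Filter.Tendsto ω Filter.atTop (nhds 0))
    (hωslow : Filter.Tendsto (fun q : ℝ => -Real.log (ω q) / Real.log q)
      Filter.atTop (nhds 0)) :
    dimH (ESet Ψ ω) = dimH (EExactSet Ψ) ∧
    dimH (EExactSet Ψ) = dimH (BadSet Ψ) ∧
    dimH (BadSet Ψ) = dimH (WSet Ψ) := by
  have H := approxData_of_hypotheses hΨpos hωmem hmono hsum hωlim hωslow
  have h1 := dimH_mono (ESet_subset_EExactSet hΨpos hωmem hωlim)
  have h2 := dimH_mono (EExactSet_subset_BadSet hΨpos)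
  have h3 : dimH (BadSet Ψ) ≤ dimH (WSet Ψ) := dimH_mono fun x hx => hx.1
  have h4 := dimH_WSet_le_dimH_ESet H
  exact ⟨h1.antisymm (h2.trans (h3.trans h4)), h2.antisymm (h3.trans (h4.trans h1)),
    h3.antisymm (h4.trans (h1.trans h2))⟩
end

section
/- Let Ψ : (0,∞) → (0,∞) and ω : (0,∞) → (0,1) be such that the map q ↦ q²Ψ(q)ω(q) is non-increasing on (0,∞). Define the lower order λ(Ψ,ω) := liminf_{q→∞} (−log(Ψ(q)ω(q)))/log q, taking values in [0,∞]. Then inf{s ≥ 0 : Σ_{q=1}^∞ q(Ψ(q)ω(q))^s < ∞} = 2/λ(Ψ,ω), with the convention that 2/λ(Ψ,ω) = 0 when λ(Ψ,ω) = ∞ (the sum is over positive integers q). -/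
/-!
Write `f q = Ψ q * ω q`.  Since `q ^ 2 * f q` is non-increasing, so is `f`.

If `t > 2 / λ`, choose `a` with `2 / t < a < λ`.  Eventually `f q ≤ q ^ (-a)`, so the series is
dominated by `∑ q ^ (1 - a * t)` with `a * t > 2`, and it converges (`summable_of_lt_lowerOrder`).

Conversely, if the series converges for `t` with sum `S`, then monotonicity of `f` gives
`f n ^ t * n (n + 1) / 2 ≤ ∑_{k ≤ n} k * f k ^ t ≤ S`, hence `f q ^ t ≤ 4 S / q ^ 2` for all real
`q ≥ 1`.  Taking logarithms, `-log (f q) / log q ≥ (2 - log (4 S) / log q) / t → 2 / t`, so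
`λ ≥ 2 / t` (`two_div_le_lowerOrder`); in particular this requires `t ≠ 0`, as `∑ q` diverges.
-/

open Filter Set
open scoped ENNReal

/-- The lower order at infinity of `q ↦ Ψ(q)ω(q)`, taken in `[0,∞]`:
`λ(Ψ,ω) = liminf_{q→∞} (−log(Ψ(q)ω(q)))/log q`. -/
noncomputable def lowerOrder (Ψ ω : ℝ → ℝ) : ℝ≥0∞ :=
  Filter.liminf
    (fun q : ℝ => ENNReal.ofReal (-Real.log (Ψ q * ω q) / Real.log q)) Filter.atTop

/-- For `f` positive and non-increasing, convergence of
`∑ q * f q ^ t` forces `f q ^ t = O(q ^ (-2))`, also along real `q`. -/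
lemma exists_sq_mul_rpow_le {f : ℝ → ℝ} (hpos : ∀ q, 0 < q → 0 < f q)
    (hf : AntitoneOn f (Set.Ioi 0)) {t : ℝ} (ht : 0 ≤ t)
    (hs : Summable (fun q : ℕ => (q : ℝ) * f q ^ t)) :
    ∃ C : ℝ, ∀ q : ℝ, 1 ≤ q → q ^ 2 * f q ^ t ≤ C := by
  have key : ∀ q : ℝ, 1 ≤ q → q ^ 2 * f q ^ t ≤ 4 * ∑' q : ℕ, (q : ℝ) * f q ^ t := by
    intro q hq
    have hq0 : 0 < q := by linarith
    have hfq := (Real.rpow_pos_of_pos (hpos q hq0) t).le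
    set n := ⌊q⌋₊ with hn
    have hn1 : (1 : ℝ) ≤ n := by
      exact_mod_cast (Nat.one_le_floor_iff q).2 hq
    have hnq : (n : ℝ) ≤ q := Nat.floor_le hq0.le
    have hqn : q < n + 1 := Nat.lt_floor_add_one q
    have h1 : ∑ k ∈ Finset.range (n + 1), (k : ℝ) * f q ^ t ≤
        ∑ k ∈ Finset.range (n + 1), (k : ℝ) * f k ^ t := by
      refine Finset.sum_le_sum fun k hk => ?_
      rcases Nat.eq_zero_or_pos k with rfl | hk0
      · simp
      have hk0' : (0 : ℝ) < k := by exact_mod_cast hk0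
      have hkn : (k : ℝ) ≤ n := by
        exact_mod_cast Nat.lt_succ_iff.1 (Finset.mem_range.1 hk)
      have hle : f q ≤ f k := hf hk0' hq0 (hkn.trans hnq)
      exact mul_le_mul_of_nonneg_left (Real.rpow_le_rpow (hpos q hq0).le hle ht) hk0'.le
    have h2 : ∑ k ∈ Finset.range (n + 1), (k : ℝ) * f k ^ t ≤ ∑' q : ℕ, (q : ℝ) * f q ^ t := by
      refine hs.sum_le_tsum _ fun k _ => ?_
      rcases Nat.eq_zero_or_pos k with rfl | hk0
      · simp
      have hk0' : (0 : ℝ) < k := by exact_mod_cast hk0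
      exact mul_nonneg hk0'.le (Real.rpow_nonneg (hpos k hk0').le _)
    have h3 : (∑ k ∈ Finset.range (n + 1), (k : ℝ)) * 2 = (n + 1) * n := by
      have := Finset.sum_range_id_mul_two (n + 1)
      rw [Nat.add_sub_cancel] at this
      rw [← Nat.cast_sum]
      exact_mod_cast this
    rw [← Finset.sum_mul] at h1
    -- `n ≥ 1` and `q < n + 1` give `q ≤ 2 n`, hence `q ^ 2 ≤ 2 n (n + 1)`
    have h4 : q ^ 2 ≤ 4 * ∑ k ∈ Finset.range (n + 1), (k : ℝ) := by nlinarith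
    nlinarith [mul_le_mul_of_nonneg_right h4 hfq]
  exact ⟨_, key⟩

lemma summable_of_lt_lowerOrder {Ψ ω : ℝ → ℝ} (hpos : ∀ q, 0 < q → 0 < Ψ q * ω q)
    {a t : ℝ} (ht : 0 ≤ t) (hat : 2 < a * t) (ha : ENNReal.ofReal a < lowerOrder Ψ ω) :
    Summable (fun q : ℕ => (q : ℝ) * (Ψ (q : ℝ) * ω (q : ℝ)) ^ t) := by
  have hev := (tendsto_natCast_atTop_atTop (R := ℝ)).eventually (eventually_lt_of_lt_liminf ha)
  have hsum : Summable (fun q : ℕ => (q : ℝ) ^ (1 - a * t)) :=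
    Real.summable_nat_rpow.2 (by linarith)
  refine hsum.of_norm_bounded_eventually_nat ?_
  filter_upwards [hev, eventually_ge_atTop 2] with q hq hq2
  have hq2' : (2 : ℝ) ≤ q := by exact_mod_cast hq2
  have hq0 : (0 : ℝ) < q := by linarith
  have hlog : 0 < Real.log q := Real.log_pos (by linarith)
  have hf := hpos q hq0
  have h1 : a < -Real.log (Ψ q * ω q) / Real.log q := (ENNReal.ofReal_lt_ofReal_iff'.1 hq).1
  rw [lt_div_iff₀ hlog] at h1
  have h2 : Ψ q * ω q ≤ (q : ℝ) ^ (-a) := by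
    rw [Real.rpow_def_of_pos hq0, ← Real.log_le_iff_le_exp hf]
    linarith
  rw [Real.norm_of_nonneg (mul_nonneg hq0.le (Real.rpow_nonneg hf.le _))]
  calc (q : ℝ) * (Ψ q * ω q) ^ t ≤ q * ((q : ℝ) ^ (-a)) ^ t :=
        mul_le_mul_of_nonneg_left (Real.rpow_le_rpow hf.le h2 ht) hq0.le
    _ = (q : ℝ) ^ (1 - a * t) := by
        rw [← Real.rpow_mul hq0.le, sub_eq_add_neg, Real.rpow_add hq0, Real.rpow_one, neg_mul]

lemma two_div_le_lowerOrder {Ψ ω : ℝ → ℝ} (hpos : ∀ q, 0 < q → 0 < Ψ q * ω q)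
    {t C : ℝ} (ht : 0 < t)
    (h : ∀ q : ℝ, 1 ≤ q → q ^ 2 * (Ψ q * ω q) ^ t ≤ C) :
    ENNReal.ofReal (2 / t) ≤ lowerOrder Ψ ω := by
  have hlim : Tendsto (fun q : ℝ => ENNReal.ofReal ((2 - Real.log C / Real.log q) / t)) atTop
      (nhds (ENNReal.ofReal (2 / t))) := by
    refine ENNReal.tendsto_ofReal (Tendsto.div_const ?_ t)
    simpa using (tendsto_const_nhds (x := (2 : ℝ))).sub
      (Real.tendsto_log_atTop.const_div_atTop (Real.log C))
  rw [← hlim.liminf_eq]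
  refine liminf_le_liminf ?_
  filter_upwards [eventually_ge_atTop 2] with q hq
  have hq0 : (0 : ℝ) < q := by linarith
  have hlog : 0 < Real.log q := Real.log_pos (by linarith)
  have hf := hpos q hq0
  have h1 := Real.log_le_log (mul_pos (pow_pos hq0 2) (Real.rpow_pos_of_pos hf t))
    (h q (by linarith))
  rw [Real.log_mul (pow_pos hq0 2).ne' (Real.rpow_pos_of_pos hf t).ne', Real.log_pow,
    Real.log_rpow hf] at h1
  push_cast at h1
  refine ENNReal.ofReal_le_ofReal ?_
  rw [div_le_iff₀ ht, div_mul_eq_mul_div, le_div_iff₀ hlog, sub_mul, div_mul_cancel₀ _ hlog.ne']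
  linarith

/-- **Theorem.** If `Ψ : (0,∞) → (0,∞)`, `ω : (0,∞) → (0,1)` and `q ↦ q²Ψ(q)ω(q)` is
non-increasing on `(0,∞)`, then
`inf {s ≥ 0 : Σ_{q≥1} q(Ψ(q)ω(q))^s < ∞} = 2/λ(Ψ,ω)`, where the infimum is taken in
`[0,∞]` (so `inf ∅ = ∞`) and `2/∞ = 0`, `2/0 = ∞`. -/
theorem sInf_summable_eq_two_div_lowerOrder (Ψ ω : ℝ → ℝ)
    (hΨpos : ∀ q : ℝ, 0 < q → 0 < Ψ q)
    (hωmem : ∀ q : ℝ, 0 < q → ω q ∈ Set.Ioo (0 : ℝ) 1)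
    (hmono : AntitoneOn (fun q : ℝ => q ^ 2 * (Ψ q * ω q)) (Set.Ioi 0)) :
    sInf {s : ℝ≥0∞ | ∃ t : ℝ, 0 ≤ t ∧ s = ENNReal.ofReal t ∧
        Summable (fun q : ℕ => (q : ℝ) * (Ψ (q : ℝ) * ω (q : ℝ)) ^ t)} =
      2 / lowerOrder Ψ ω := by
  have hpos : ∀ q, 0 < q → 0 < Ψ q * ω q := fun q hq => mul_pos (hΨpos q hq) (hωmem q hq).1
  have hanti : AntitoneOn (fun q => Ψ q * ω q) (Set.Ioi 0) := by
    intro x hx y hy hxy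
    have hx0 : (0 : ℝ) < x := hx
    have hy0 : (0 : ℝ) < y := hy
    have h1 : y ^ 2 * (Ψ y * ω y) ≤ x ^ 2 * (Ψ x * ω x) := hmono hx hy hxy
    have h2 : x ^ 2 * (Ψ x * ω x) ≤ y ^ 2 * (Ψ x * ω x) :=
      mul_le_mul_of_nonneg_right (pow_le_pow_left₀ hx0.le hxy 2) (hpos x hx0).le
    exact le_of_mul_le_mul_left (h1.trans h2) (pow_pos hy0 2)
  apply le_antisymm
  · refine le_of_forall_gt_imp_ge_of_dense fun b hb => ?_
    obtain ⟨r, hr, hrb⟩ := ENNReal.lt_iff_exists_nnreal_btwn.1 hb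
    have hr0 : 0 < r := by exact_mod_cast (zero_le (a := 2 / lowerOrder Ψ ω)).trans_lt hr
    have hL0 : lowerOrder Ψ ω ≠ 0 := by
      intro h0
      rw [h0, ENNReal.div_zero two_ne_zero] at hr
      exact not_top_lt hr
    have hlt : 2 / (r : ℝ≥0∞) < lowerOrder Ψ ω := by
      by_contra! hle
      refine hr.not_ge ?_
      rw [ENNReal.le_div_iff_mul_le (.inl hL0) (.inr ENNReal.ofNat_ne_top), mul_comm]
      exact ENNReal.mul_le_of_le_div hle
    obtain ⟨a, ha, haL⟩ := ENNReal.lt_iff_exists_nnreal_btwn.1 hlt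
    have hat : (2 : ℝ) < a * r := by
      rw [ENNReal.div_lt_iff (.inl (by exact_mod_cast hr0.ne')) (.inl ENNReal.coe_ne_top)] at ha
      exact_mod_cast ha
    refine le_trans (sInf_le ?_) hrb.le
    refine ⟨r, r.2, ENNReal.ofReal_coe_nnreal.symm, ?_⟩
    exact summable_of_lt_lowerOrder hpos r.2 hat (by rwa [ENNReal.ofReal_coe_nnreal])
  · refine le_sInf ?_
    rintro _ ⟨t, ht, rfl, hs⟩
    rcases ht.eq_or_lt with rfl | ht0
    · exfalso
      simp only [Real.rpow_zero, mul_one] at hs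
      have := Real.summable_nat_rpow (p := 1)
      simp only [Real.rpow_one] at this
      linarith [this.1 hs]
    obtain ⟨C, h⟩ := exists_sq_mul_rpow_le (f := fun q => Ψ q * ω q) hpos hanti ht hs
    have hL := two_div_le_lowerOrder hpos ht0 h
    refine ENNReal.div_le_of_le_mul ?_
    calc (2 : ℝ≥0∞) = ENNReal.ofReal t * ENNReal.ofReal (2 / t) := by
          rw [← ENNReal.ofReal_mul ht, mul_div_cancel₀ _ ht0.ne']
          simp
      _ ≤ _ := by gcongr
end

section
/- Let (a_1, …, a_n) be a finite word of positive integers, let c be an integer with c ≥ 2, and let b be a positive integer. Then the Lebesgue measure of the fundamental interval I(0; a_1, …, a_n, c, b) is greater than or equal to the Lebesgue measure of the fundamental interval I(0; a_1, …, a_n, c − 1, 1, b). -/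
/-!
For a word `l = (b₁, …, bₘ)` let `cfEval l t = 1/(b₁ + 1/(b₂ + ⋯ + 1/(bₘ + t)))`. Since the first
partial denominator of `x ∈ (0,1)` is `⌊1/x⌋` and the later ones are those of the fractional part
of `1/x`, an induction on `l` shows that `fundInterval l` lies between the open and the closed
interval with endpoints `cfEval l 0` and `cfEval l 1`; its Lebesgue measure is therefore
`|cfEval l 1 - cfEval l 0|` (`volume_fundInterval`).

For a prefix `a`, the map `t ↦ cfEval a t` is a Möbius map `(p + p' t) / (q + q' t)` with
determinant `±1`, `q > 0` and `q' ≥ 0`, where `q`, `q'` are the last two continuants of `a`. Hence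
it shrinks the distance of `s` and `t` by the factor `(q + q' s)(q + q' t)`
(`exists_abs_cfEval_sub`). Applied to the two suffixes, this gives the reciprocals of the measures
as products of two factors:

* for `(c, b)`: `(q (c b + 1) + q' b) (q (c (b + 1) + 1) + q' (b + 1))`;
* for `(c - 1, 1, b)`:
  `(q (c (b + 1) - 1) + q' (b + 1)) (q (c (b + 2) - 1) + q' (b + 2))`.

As `c ≥ 2`, each factor in the second product is at least its counterpart in the first.
-/

open Filter Set

/-- The fundamental interval `I(0; b₁, …, bₘ)`: the set of `x ∈ (0,1)` whose regular
continued fraction expansion `x = [0; a₁(x), a₂(x), …]` satisfies `aᵢ(x) = bᵢ` for all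
`1 ≤ i ≤ m`, where `aᵢ(x)` is the `i`-th partial denominator of the continued fraction
expansion of `x` (as computed by `GenContFract.of`). -/
def fundInterval (l : List ℕ) : Set ℝ :=
  {x ∈ Set.Ioo (0 : ℝ) 1 | ∀ i : Fin l.length,
    (GenContFract.of x).partDens.get? (i : ℕ) = some ((l.get i : ℕ) : ℝ)}

/-- The finite continued fraction `1/(b₁ + 1/(b₂ + ⋯ + 1/(bₘ + t)))` with tail `t`; it equals `t`
for the empty word. -/
noncomputable def cfEval (l : List ℕ) (t : ℝ) : ℝ :=
  l.foldr (fun k y => ((k : ℝ) + y)⁻¹) t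

@[simp] lemma cfEval_nil (t : ℝ) : cfEval [] t = t := rfl

@[simp] lemma cfEval_cons (k : ℕ) (l : List ℕ) (t : ℝ) :
    cfEval (k :: l) t = ((k : ℝ) + cfEval l t)⁻¹ := rfl

lemma cfEval_append (l m : List ℕ) (t : ℝ) :
    cfEval (l ++ m) t = cfEval l (cfEval m t) := by
  simp [cfEval, List.foldr_append]

lemma cfEval_nonneg (l : List ℕ) {t : ℝ} (ht : 0 ≤ t) : 0 ≤ cfEval l t := by
  induction l with
  | nil => simpa
  | cons k l ih => simp only [cfEval_cons]; positivity

lemma partDens_of_get?_zero {x : ℝ} (hx : x ∈ Ioo (0 : ℝ) 1) :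
    (GenContFract.of x).partDens.get? 0 = some ((⌊x⁻¹⌋ : ℤ) : ℝ) := by
  have hf : Int.fract x = x := Int.fract_eq_self.2 ⟨hx.1.le, hx.2⟩
  have h := GenContFract.of_s_head (v := x) (by rw [hf]; exact hx.1.ne')
  rw [hf] at h
  exact GenContFract.partDen_eq_s_b h

lemma partDens_of_fract (v : ℝ) (n : ℕ) :
    (GenContFract.of (Int.fract v)).partDens.get? n = (GenContFract.of v).partDens.get? n := by
  simp only [GenContFract.partDens, Stream'.Seq.map_get?]
  congr 1
  cases n with
  | succ n => rw [GenContFract.of_s_succ, GenContFract.of_s_succ, Int.fract_fract]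
  | zero =>
    rcases eq_or_ne (Int.fract v) 0 with h | h
    · obtain ⟨z, rfl⟩ : ∃ z : ℤ, v = z := ⟨⌊v⌋, eq_of_sub_eq_zero h⟩
      rw [h, GenContFract.of_s_of_int, ← Int.cast_zero, GenContFract.of_s_of_int]
    · have h1 := GenContFract.of_s_head h
      have h2 := GenContFract.of_s_head (v := Int.fract v) (by rwa [Int.fract_fract])
      rw [Int.fract_fract] at h2
      exact h2.trans h1.symm

lemma partDens_of_get?_succ {x : ℝ} (hx : x ∈ Ioo (0 : ℝ) 1) (n : ℕ) :
    (GenContFract.of x).partDens.get? (n + 1) =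
      (GenContFract.of (Int.fract x⁻¹)).partDens.get? n := by
  have hf : Int.fract x = x := Int.fract_eq_self.2 ⟨hx.1.le, hx.2⟩
  rw [partDens_of_fract]
  simp only [GenContFract.partDens, Stream'.Seq.map_get?]
  rw [GenContFract.of_s_succ, hf]

lemma partDens_of_zero (n : ℕ) : (GenContFract.of (0 : ℝ)).partDens.get? n = none := by
  rw [GenContFract.partDen_none_iff_s_none, ← Int.cast_zero, GenContFract.of_s_of_int]
  rfl

lemma mem_fundInterval_cons {k : ℕ} {l : List ℕ} {x : ℝ} :
    x ∈ fundInterval (k :: l) ↔ x ∈ Ioo (0 : ℝ) 1 ∧ ⌊x⁻¹⌋ = (k : ℤ) ∧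
      ∀ i : Fin l.length, (GenContFract.of (Int.fract x⁻¹)).partDens.get? (i : ℕ) =
        some ((l.get i : ℕ) : ℝ) := by
  unfold fundInterval
  refine and_congr_right fun hx => ?_
  refine (Fin.forall_fin_succ (n := l.length)).trans (and_congr ?_ (forall_congr' fun i => ?_))
  · simp only [Fin.val_zero, partDens_of_get?_zero hx]
    simp only [Option.some.injEq]
    change ((⌊x⁻¹⌋ : ℤ) : ℝ) = (k : ℝ) ↔ _
    exact_mod_cast Iff.rfl
  · rw [Fin.val_succ, partDens_of_get?_succ hx]
    rfl

lemma fundInterval_subset (l : List ℕ) :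
    fundInterval l ⊆ uIcc (cfEval l 0) (cfEval l 1) := by
  induction l with
  | nil =>
    intro x hx
    exact mem_uIcc.2 (Or.inl ⟨hx.1.1.le, hx.1.2.le⟩)
  | cons k l ih =>
    intro x hx
    obtain ⟨hx01, hk, hl⟩ := mem_fundInterval_cons.1 hx
    have hy : Int.fract x⁻¹ ∈ uIcc (cfEval l 0) (cfEval l 1) := by
      rcases eq_or_ne (Int.fract x⁻¹) 0 with h0 | h0
      · -- A terminating expansion is only compatible with the empty remaining word.
        cases l with
        | nil => rw [h0]; simp
        | cons m l =>
          have := hl ⟨0, by simp⟩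
          rw [h0, partDens_of_zero] at this
          simp at this
      · exact ih ⟨⟨lt_of_le_of_ne (Int.fract_nonneg _) h0.symm, Int.fract_lt_one _⟩, hl⟩
    have hxi : x⁻¹ = (k : ℝ) + Int.fract x⁻¹ := by
      have := Int.floor_add_fract x⁻¹
      rw [hk] at this
      exact_mod_cast this.symm
    have hx0 : 0 < x⁻¹ := inv_pos.2 hx01.1
    have hk1 : (1 : ℝ) ≤ k := by
      have : 1 ≤ ⌊x⁻¹⌋ := Int.le_floor.2 (by simpa using (one_lt_inv₀ hx01.1).2 hx01.2 |>.le)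
      rw [hk] at this
      exact_mod_cast this
    have e0 := cfEval_nonneg l (le_refl (0 : ℝ))
    have e1 := cfEval_nonneg l (zero_le_one (α := ℝ))
    rw [← inv_inv x]
    simp only [cfEval_cons]
    rw [mem_uIcc] at hy ⊢
    rcases hy with ⟨h1, h2⟩ | ⟨h1, h2⟩
    · exact Or.inr ⟨inv_anti₀ hx0 (by linarith), inv_anti₀ (by linarith) (by linarith)⟩
    · exact Or.inl ⟨inv_anti₀ hx0 (by linarith), inv_anti₀ (by linarith) (by linarith)⟩

lemma uIoo_subset_fundInterval (l : List ℕ) (hl : ∀ k ∈ l, 0 < k) :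
    uIoo (cfEval l 0) (cfEval l 1) ⊆ fundInterval l := by
  induction l with
  | nil =>
    intro x hx
    refine ⟨by simpa using hx, fun i => i.elim0⟩
  | cons k l ih =>
    intro x hx
    have hk1 : (1 : ℝ) ≤ k := by exact_mod_cast hl k (by simp)
    have e0 := cfEval_nonneg l (le_refl (0 : ℝ))
    have e1 := cfEval_nonneg l (zero_le_one (α := ℝ))
    have hy : 0 < x ∧ x⁻¹ - k ∈ uIoo (cfEval l 0) (cfEval l 1) := by
      simp only [cfEval_cons] at hx
      have p0 : (0 : ℝ) < k + cfEval l 0 := by linarith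
      have p1 : (0 : ℝ) < k + cfEval l 1 := by linarith
      rcases le_total (cfEval l 0) (cfEval l 1) with h | h
      · rw [uIoo_of_ge (inv_anti₀ p0 (by linarith))] at hx
        have hx0 : 0 < x := (inv_pos.2 p1).trans hx.1
        have h1 := (inv_lt_comm₀ p1 hx0).1 hx.1
        have h2 := (lt_inv_comm₀ hx0 p0).1 hx.2
        exact ⟨hx0, mem_uIoo_of_lt (by linarith) (by linarith)⟩
      · rw [uIoo_of_le (inv_anti₀ p1 (by linarith))] at hx
        have hx0 : 0 < x := (inv_pos.2 p0).trans hx.1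
        have h1 := (inv_lt_comm₀ p0 hx0).1 hx.1
        have h2 := (lt_inv_comm₀ hx0 p1).1 hx.2
        exact ⟨hx0, mem_uIoo_of_gt (by linarith) (by linarith)⟩
    obtain ⟨hx0, hy⟩ := hy
    have hy' := ih (fun m hm => hl m (by simp [hm])) hy
    have hfl : ⌊x⁻¹⌋ = (k : ℤ) := by
      rw [Int.floor_eq_iff]
      have h1 := hy'.1.1
      have h2 := hy'.1.2
      push_cast
      constructor <;> linarith
    have hfr : Int.fract x⁻¹ = x⁻¹ - k := by
      rw [Int.fract, hfl]
      push_cast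
      rfl
    refine mem_fundInterval_cons.2 ⟨⟨hx0, ?_⟩, hfl, ?_⟩
    · have h1 := hy'.1.1
      exact (one_lt_inv₀ hx0).1 (by linarith)
    · rw [hfr]
      exact hy'.2

lemma volume_fundInterval (l : List ℕ) (hl : ∀ k ∈ l, 0 < k) :
    MeasureTheory.volume (fundInterval l) = ENNReal.ofReal |cfEval l 1 - cfEval l 0| := by
  apply le_antisymm
  · exact (MeasureTheory.measure_mono (fundInterval_subset l)).trans Real.volume_interval.le
  · refine le_trans (le_of_eq ?_)
      (MeasureTheory.measure_mono (uIoo_subset_fundInterval l hl))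
    rw [uIoo, Real.volume_Ioo]
    congr 1
    exact (max_sub_min_eq_abs _ _).symm

/-- The Möbius form of `cfEval`: the coefficients are the numerators and denominators of the last
two convergents of the word. -/
lemma exists_cfEval_eq_div (l : List ℕ) (hl : ∀ k ∈ l, 0 < k) :
    ∃ p p' q q' : ℝ, 0 ≤ p ∧ 0 ≤ p' ∧ 0 < q ∧ 0 ≤ q' ∧ |p' * q - p * q'| = 1 ∧
      (∀ t, 0 ≤ t → cfEval l t = (p + p' * t) / (q + q' * t)) := by
  induction l with
  | nil => exact ⟨0, 1, 1, 0, by simp⟩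
  | cons k l ih =>
    obtain ⟨p, p', q, q', hp, hp', hq, hq', hd, h⟩ := ih fun m hm => hl m (by simp [hm])
    have hk : (0 : ℝ) < k := by exact_mod_cast hl k (by simp)
    refine ⟨q, q', k * q + p, k * q' + p', hq.le, hq', by positivity, by positivity, ?_, ?_⟩
    · rw [← hd, ← abs_neg]
      congr 1
      ring
    · intro t ht
      have h1 : 0 < q + q' * t := by positivity
      rw [cfEval_cons, h t ht, ← inv_div]
      field_simp
      ring

lemma exists_abs_cfEval_sub (l : List ℕ) (hl : ∀ k ∈ l, 0 < k) :
    ∃ q q' : ℝ, 0 < q ∧ 0 ≤ q' ∧ ∀ s t, 0 ≤ s → 0 ≤ t →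
      |cfEval l s - cfEval l t| = |s - t| / ((q + q' * s) * (q + q' * t)) := by
  obtain ⟨p, p', q, q', -, -, hq, hq', hd, h⟩ := exists_cfEval_eq_div l hl
  refine ⟨q, q', hq, hq', fun s t hs ht => ?_⟩
  have h1 : 0 < q + q' * s := by positivity
  have h2 : 0 < q + q' * t := by positivity
  rw [h s hs, h t ht, div_sub_div _ _ h1.ne' h2.ne', abs_div, abs_of_pos (mul_pos h1 h2)]
  congr 1
  rw [← one_mul |s - t|, ← hd, ← abs_mul]
  congr 1
  ring

/-- **Lemma.** For a finite word `(a₁, …, aₙ)` of positive integers, an integer `c ≥ 2` and a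
positive integer `b`, the Lebesgue measure of `I(0; a₁, …, aₙ, c, b)` is at least the
Lebesgue measure of `I(0; a₁, …, aₙ, c − 1, 1, b)`. -/
theorem volume_fundInterval_ge (a : List ℕ) (ha : ∀ x ∈ a, 0 < x)
    (c : ℕ) (hc : 2 ≤ c) (b : ℕ) (hb : 0 < b) :
    MeasureTheory.volume (fundInterval (a ++ [c - 1, 1, b])) ≤
      MeasureTheory.volume (fundInterval (a ++ [c, b])) := by
  rw [volume_fundInterval, volume_fundInterval]
  rotate_left
  · intro k hk
    simp only [List.mem_append, List.mem_cons, List.not_mem_nil, or_false] at hk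
    rcases hk with hk | rfl | rfl
    exacts [ha k hk, by omega, hb]
  · intro k hk
    simp only [List.mem_append, List.mem_cons, List.not_mem_nil, or_false] at hk
    rcases hk with hk | rfl | rfl | rfl
    exacts [ha k hk, by omega, one_pos, hb]
  apply ENNReal.ofReal_le_ofReal
  obtain ⟨q, q', hq, hq', h⟩ := exists_abs_cfEval_sub a ha
  simp only [cfEval_append]
  rw [h _ _ (cfEval_nonneg _ zero_le_one) (cfEval_nonneg _ le_rfl),
    h _ _ (cfEval_nonneg _ zero_le_one) (cfEval_nonneg _ le_rfl)]
  simp only [cfEval_cons, cfEval_nil, Nat.cast_sub (show 1 ≤ c by omega), Nat.cast_one, add_zero]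
  have hC : (2 : ℝ) ≤ c := by exact_mod_cast hc
  have hB : (1 : ℝ) ≤ b := by exact_mod_cast hb
  generalize (c : ℝ) = C at *
  generalize (b : ℝ) = B at *
  have hB0 : 0 < B := by linarith
  -- Positivity of the convergent denominators of the two suffixes, with tails `0` and `1`.
  have d1 : 0 < C * B + 1 := by positivity
  have d2 : 0 < C * (B + 1) + 1 := by positivity
  have d3 : 0 < C * (B + 1) - 1 := by nlinarith
  have d4 : 0 < C * (B + 2) - 1 := by nlinarith
  have e1 : (C + B⁻¹)⁻¹ = B / (C * B + 1) := by field_simp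
  have e2 : (C + (B + 1)⁻¹)⁻¹ = (B + 1) / (C * (B + 1) + 1) := by field_simp
  have e3 : (C - 1 + (1 + B⁻¹)⁻¹)⁻¹ = (B + 1) / (C * (B + 1) - 1) := by
    rw [← inv_div]
    congr 1
    field_simp
    ring
  have e4 : (C - 1 + (1 + (B + 1)⁻¹)⁻¹)⁻¹ = (B + 2) / (C * (B + 2) - 1) := by
    rw [← inv_div]
    congr 1
    have : B + 1 + 1 ≠ 0 := by positivity
    field_simp
    ring
  rw [e1, e2, e3, e4]
  have f1 : 0 < q * (C * B + 1) + q' * B := by positivity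
  have f2 : 0 < q * (C * (B + 1) + 1) + q' * (B + 1) := by positivity
  have f3 : q * (C * B + 1) + q' * B ≤ q * (C * (B + 1) - 1) + q' * (B + 1) := by
    nlinarith [mul_nonneg hq.le (sub_nonneg.2 hC)]
  have f4 : q * (C * (B + 1) + 1) + q' * (B + 1) ≤ q * (C * (B + 2) - 1) + q' * (B + 2) := by
    nlinarith [mul_nonneg hq.le (sub_nonneg.2 hC)]
  have key : ∀ m n u v : ℝ, 0 < m → 0 < n → |u * n - v * m| = 1 →
      |u / m - v / n| / ((q + q' * (u / m)) * (q + q' * (v / n))) =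
        1 / ((q * n + q' * v) * (q * m + q' * u)) := by
    intro m n u v hm hn huv
    rw [div_sub_div _ _ hm.ne' hn.ne', mul_comm m v, abs_div, huv, abs_of_pos (mul_pos hm hn),
      div_div]
    congr 1
    field_simp
  rw [key _ _ _ _ d2 d1, key _ _ _ _ d4 d3]
  · exact one_div_le_one_div_of_le (mul_pos f1 f2) (mul_le_mul f3 f4 f2.le (f1.le.trans f3))
  · rw [abs_eq zero_le_one]
    right
    ring
  · rw [abs_eq zero_le_one]
    left
    ring
end
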